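/- arXiv:math/0702651 — 3 statements merged into one kernel-verified Lean document; each statement's English description precedes it below -/
import Mathlib

section
/- Let n ≥ 2 and m ≥ 1. Then there exist elements φ ≤ ψ of the free Heyting algebra H_n such that the interval [φ,ψ] = {ρ ∈ H_n : φ ≤ ρ ≤ ψ} is lattice-isomorphic to the free Heyting algebra H_m; moreover, the lattice isomorphism from [φ,ψ] to H_m extends to a surjective lattice homomorphism from H_n onto H_m. -/
/-!
The interval is found by placing a copy of the canonical Kripke frame of `H_m` below a finite
frame `U` inside the `n`-variable models.

Let `U` be a finite frame whose Heyting algebra of persistent sets is generated by `n`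
elements, with valuation `e : H_n → Up(U)`, and suppose `U` has `m` points `a_i` seen by no
other point, while the set `D` of the remaining points is not seen in full by any one point.
As `Up(U)` is finite, `e` is the quotient by a principal filter, generated by the diagram
formula `φ` (`exists_diagram`); hence every `u ∈ U` has a largest `α_u ∈ H_n` not forced at
`u`.  Put `ψ = ⋀_{d ∈ D} (α_d → φ) ∧ ⋀_x (x → φ)`: a point forcing `ψ` but not `φ` forces no
variable, sees all of `D`, and can be told from another such point only by which `a_i` it
sees and by what lies between it and `U`.

So let `x_i ∈ H_m` stand for the point `a_i` not being seen.  Artin glueing of `H_m` and `Up(U)` along the map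
`frameMap` that expresses this yields a Heyting homomorphism from `H_n` whose first component
`g : H_n → H_m` preserves `∧` and `∨` and satisfies
`g (ρ → σ) = (g ρ → g σ) ∧ frameMap (e (ρ → σ))`.  Conversely, the interval `[φ, ψ]` is a
Heyting algebra and `x_i ↦ (α_{a_i} ∧ ψ) ∨ φ` extends to a Heyting homomorphism
`T : H_m → [φ, ψ]`.  Inductions over formulas give `g (T τ) = τ` and
`T (g ρ) = (ρ ∧ ψ) ∨ φ`, so `g` restricts to a bijection `[φ, ψ] → H_m`
(`interval_of_frame`).

A suitable `U` is a finite part of the Rieger–Nishimura ladder with a leaf hung below each of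
its points: one variable generates the ladder, a second one marks it, and the leaves supply
arbitrarily many points seen by no other (`Ladder.lift_val_surjective`).
-/


/-- Propositional formulas over a set `V` of variables, built from `∧, ∨, →, ⊥, ⊤`.
`¬φ` is the abbreviation `φ → ⊥`. -/
inductive PropForm (V : Type) : Type
  | var : V → PropForm V
  | bot : PropForm V
  | top : PropForm V
  | and : PropForm V → PropForm V → PropForm V
  | or : PropForm V → PropForm V → PropForm V
  | imp : PropForm V → PropForm V → PropForm V

/-- A natural-deduction style consequence relation.  When the parameter `cl` is `False`
this is exactly the consequence relation `⊢` of intuitionistic propositional logic;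
when `cl` is `True` the rule of excluded middle becomes available and it is the
consequence relation `⊢_C` of classical propositional logic. -/
inductive Prov {V : Type} (cl : Prop) : Set (PropForm V) → PropForm V → Prop
  | ax : ∀ {Γ : Set (PropForm V)} {φ}, φ ∈ Γ → Prov cl Γ φ
  | topI : ∀ {Γ}, Prov cl Γ .top
  | botE : ∀ {Γ φ}, Prov cl Γ .bot → Prov cl Γ φ
  | andI : ∀ {Γ φ ψ}, Prov cl Γ φ → Prov cl Γ ψ → Prov cl Γ (.and φ ψ)
  | andE1 : ∀ {Γ φ ψ}, Prov cl Γ (.and φ ψ) → Prov cl Γ φ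
  | andE2 : ∀ {Γ φ ψ}, Prov cl Γ (.and φ ψ) → Prov cl Γ ψ
  | orI1 : ∀ {Γ φ ψ}, Prov cl Γ φ → Prov cl Γ (.or φ ψ)
  | orI2 : ∀ {Γ φ ψ}, Prov cl Γ ψ → Prov cl Γ (.or φ ψ)
  | orE : ∀ {Γ φ ψ χ}, Prov cl Γ (.or φ ψ) → Prov cl (insert φ Γ) χ →
      Prov cl (insert ψ Γ) χ → Prov cl Γ χ
  | impI : ∀ {Γ φ ψ}, Prov cl (insert φ Γ) ψ → Prov cl Γ (.imp φ ψ)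
  | impE : ∀ {Γ φ ψ}, Prov cl Γ (.imp φ ψ) → Prov cl Γ φ → Prov cl Γ ψ
  | em : ∀ {Γ φ}, cl → Prov cl Γ (.or φ (.imp φ .bot))

/-- Intuitionistic consequence `Γ ⊢ φ`. -/
abbrev IProv {V : Type} (Γ : Set (PropForm V)) (φ : PropForm V) : Prop := Prov False Γ φ

/-- Classical consequence `Γ ⊢_C φ`. -/
abbrev CProv {V : Type} (Γ : Set (PropForm V)) (φ : PropForm V) : Prop := Prov True Γ φ

theorem Prov.mono {V : Type} {cl : Prop} {Γ : Set (PropForm V)} {φ : PropForm V}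
    (h : Prov cl Γ φ) : ∀ {Δ : Set (PropForm V)}, Γ ⊆ Δ → Prov cl Δ φ := by
  induction h with
  | ax hmem => intro Δ hsub; exact Prov.ax (hsub hmem)
  | topI => intro Δ _; exact Prov.topI
  | botE _ ih => intro Δ hsub; exact Prov.botE (ih hsub)
  | andI _ _ ih1 ih2 => intro Δ hsub; exact Prov.andI (ih1 hsub) (ih2 hsub)
  | andE1 _ ih => intro Δ hsub; exact Prov.andE1 (ih hsub)
  | andE2 _ ih => intro Δ hsub; exact Prov.andE2 (ih hsub)
  | orI1 _ ih => intro Δ hsub; exact Prov.orI1 (ih hsub)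
  | orI2 _ ih => intro Δ hsub; exact Prov.orI2 (ih hsub)
  | orE _ _ _ ih1 ih2 ih3 =>
      intro Δ hsub
      exact Prov.orE (ih1 hsub) (ih2 (Set.insert_subset_insert hsub))
        (ih3 (Set.insert_subset_insert hsub))
  | impI _ ih => intro Δ hsub; exact Prov.impI (ih (Set.insert_subset_insert hsub))
  | impE _ _ ih1 ih2 => intro Δ hsub; exact Prov.impE (ih1 hsub) (ih2 hsub)
  | em hcl => intro Δ _; exact Prov.em hcl

theorem Prov.cut {V : Type} {cl : Prop} {Γ : Set (PropForm V)} {φ ψ : PropForm V}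
    (h1 : Prov cl Γ φ) (h2 : Prov cl (insert φ Γ) ψ) : Prov cl Γ ψ :=
  Prov.impE (Prov.impI h2) h1

/-- Single-premise consequence: `φ ⊢ ψ` (intuitionistic when `cl = False`). -/
def Entails {V : Type} (cl : Prop) (φ ψ : PropForm V) : Prop := Prov cl {φ} ψ

theorem Entails.refl {V : Type} {cl : Prop} (φ : PropForm V) : Entails cl φ φ := Prov.ax rfl

theorem Entails.trans' {V : Type} {cl : Prop} {φ ψ χ : PropForm V}
    (h1 : Entails cl φ ψ) (h2 : Entails cl ψ χ) : Entails cl φ χ :=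
  Prov.cut h1 (h2.mono (Set.singleton_subset_iff.mpr (Set.mem_insert _ _)))

theorem Entails.and_congr {V : Type} {cl : Prop} {a b c d : PropForm V}
    (h1 : Entails cl a b) (h2 : Entails cl c d) :
    Entails cl (PropForm.and a c) (PropForm.and b d) := by
  have ha : Prov cl ({PropForm.and a c} : Set (PropForm V)) a := Prov.andE1 (Prov.ax rfl)
  have hc : Prov cl ({PropForm.and a c} : Set (PropForm V)) c := Prov.andE2 (Prov.ax rfl)
  exact Prov.andI
    (Prov.cut ha (h1.mono (Set.singleton_subset_iff.mpr (Set.mem_insert _ _))))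
    (Prov.cut hc (h2.mono (Set.singleton_subset_iff.mpr (Set.mem_insert _ _))))

theorem Entails.or_congr {V : Type} {cl : Prop} {a b c d : PropForm V}
    (h1 : Entails cl a b) (h2 : Entails cl c d) :
    Entails cl (PropForm.or a c) (PropForm.or b d) :=
  Prov.orE (Prov.ax rfl)
    (Prov.orI1 (h1.mono (Set.singleton_subset_iff.mpr (Set.mem_insert _ _))))
    (Prov.orI2 (h2.mono (Set.singleton_subset_iff.mpr (Set.mem_insert _ _))))

/-- Logical equivalence (intuitionistic when `cl = False`, classical when `cl = True`). -/
def provSetoid (cl : Prop) (V : Type) : Setoid (PropForm V) where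
  r φ ψ := Entails cl φ ψ ∧ Entails cl ψ φ
  iseqv := ⟨fun φ => ⟨Entails.refl φ, Entails.refl φ⟩, fun h => ⟨h.2, h.1⟩,
    fun h1 h2 => ⟨h1.1.trans' h2.1, h2.2.trans' h1.2⟩⟩

/-- The Lindenbaum algebra of formulas over `V` modulo logical equivalence.
`Lindenbaum False (Fin n)` is the free Heyting algebra `H_n`,
`Lindenbaum False ℕ` is `H_ω`, and `Lindenbaum True ℕ` is the free Boolean
algebra `B_ω`. -/
def Lindenbaum (cl : Prop) (V : Type) : Type := Quotient (provSetoid cl V)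

/-- The equivalence class of a formula. -/
def Lindenbaum.mk (cl : Prop) {V : Type} (φ : PropForm V) : Lindenbaum cl V :=
  Quotient.mk (provSetoid cl V) φ

/-- The order of the Lindenbaum algebra: `[φ] ≤ [ψ]` iff `φ ⊢ ψ`. -/
def Lindenbaum.le {cl : Prop} {V : Type} : Lindenbaum cl V → Lindenbaum cl V → Prop :=
  Quotient.lift₂ (Entails cl) (by
    intro a b a' b' ha hb
    obtain ⟨ha1, ha2⟩ := ha
    obtain ⟨hb1, hb2⟩ := hb
    exact propext ⟨fun h => (ha2.trans' h).trans' hb1, fun h => (ha1.trans' h).trans' hb2⟩)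

/-- The meet `∧` of the Lindenbaum algebra. -/
def Lindenbaum.inf {cl : Prop} {V : Type} :
    Lindenbaum cl V → Lindenbaum cl V → Lindenbaum cl V :=
  Quotient.map₂ PropForm.and (by
    intro a a' ha b b' hb
    obtain ⟨ha1, ha2⟩ := ha
    obtain ⟨hb1, hb2⟩ := hb
    exact ⟨ha1.and_congr hb1, ha2.and_congr hb2⟩)

/-- The join `∨` of the Lindenbaum algebra. -/
def Lindenbaum.sup {cl : Prop} {V : Type} :
    Lindenbaum cl V → Lindenbaum cl V → Lindenbaum cl V :=
  Quotient.map₂ PropForm.or (by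
    intro a a' ha b b' hb
    obtain ⟨ha1, ha2⟩ := ha
    obtain ⟨hb1, hb2⟩ := hb
    exact ⟨ha1.or_congr hb1, ha2.or_congr hb2⟩)

/-! ### The Lindenbaum algebra as the free Heyting algebra -/

namespace FreeHeyting

open scoped symmDiff

theorem entails_imp_iff {V : Type} {cl : Prop} {a b c : PropForm V} :
    Entails cl a (.imp b c) ↔ Entails cl (.and a b) c := by
  constructor
  · intro h
    have h1 : Entails cl (PropForm.and a b) (.imp b c) :=
      Entails.trans' (Prov.andE1 (Prov.ax rfl)) h
    exact Prov.impE h1 (Prov.andE2 (Prov.ax rfl))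
  · intro h
    refine Prov.impI (Prov.cut (φ := PropForm.and a b) (Prov.andI ?_ ?_) ?_)
    · exact Prov.ax (by simp)
    · exact Prov.ax (by simp)
    · exact Prov.mono h (by simp)

/-- The implication of the Lindenbaum algebra. -/
def himp {cl : Prop} {V : Type} : Lindenbaum cl V → Lindenbaum cl V → Lindenbaum cl V :=
  Quotient.map₂ PropForm.imp (by
    have key : ∀ {a a' b b' : PropForm V}, Entails cl a' a → Entails cl b b' →
        Entails cl (.imp a b) (.imp a' b') := fun ha hb =>
      entails_imp_iff.2 <| (Entails.and_congr (Entails.refl _) ha).trans' <|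
        (entails_imp_iff.1 (Entails.refl _)).trans' hb
    intro a a' ha b b' hb
    exact ⟨key ha.2 hb.1, key ha.1 hb.2⟩)

instance {V : Type} : HeytingAlgebra (Lindenbaum False V) where
  le := Lindenbaum.le
  sup := Lindenbaum.sup
  inf := Lindenbaum.inf
  himp := himp
  compl a := himp a (Lindenbaum.mk False .bot)
  top := Lindenbaum.mk False .top
  bot := Lindenbaum.mk False .bot
  le_refl := by rintro ⟨a⟩; exact Entails.refl a
  le_trans := by rintro ⟨a⟩ ⟨b⟩ ⟨c⟩ h1 h2; exact Entails.trans' h1 h2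
  le_antisymm := by rintro ⟨a⟩ ⟨b⟩ h1 h2; exact Quotient.sound ⟨h1, h2⟩
  le_sup_left := by rintro ⟨a⟩ ⟨b⟩; exact Prov.orI1 (Prov.ax rfl)
  le_sup_right := by rintro ⟨a⟩ ⟨b⟩; exact Prov.orI2 (Prov.ax rfl)
  sup_le := by
    rintro ⟨a⟩ ⟨b⟩ ⟨c⟩ h1 h2
    exact Prov.orE (Prov.ax rfl) (Prov.mono h1 (by simp)) (Prov.mono h2 (by simp))
  inf_le_left := by rintro ⟨a⟩ ⟨b⟩; exact Prov.andE1 (Prov.ax rfl)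
  inf_le_right := by rintro ⟨a⟩ ⟨b⟩; exact Prov.andE2 (Prov.ax rfl)
  le_inf := by rintro ⟨a⟩ ⟨b⟩ ⟨c⟩ h1 h2; exact Prov.andI h1 h2
  le_top := by rintro ⟨a⟩; exact Prov.topI
  bot_le := by rintro ⟨a⟩; exact Prov.botE (Prov.ax rfl)
  le_himp_iff := by rintro ⟨a⟩ ⟨b⟩ ⟨c⟩; exact entails_imp_iff
  himp_bot := fun _ => rfl

/-- The free generator attached to a variable. -/
def gen {V : Type} (v : V) : Lindenbaum False V := Lindenbaum.mk False (.var v)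

@[elab_as_elim]
theorem ind {V : Type} {P : Lindenbaum False V → Prop} (x : Lindenbaum False V)
    (hgen : ∀ v, P (gen v)) (hbot : P ⊥) (htop : P ⊤)
    (hinf : ∀ a b, P a → P b → P (a ⊓ b)) (hsup : ∀ a b, P a → P b → P (a ⊔ b))
    (himp : ∀ a b, P a → P b → P (a ⇨ b)) : P x := by
  obtain ⟨φ⟩ := x
  change P (Lindenbaum.mk False φ)
  induction φ with
  | var v => exact hgen v
  | bot => exact hbot
  | top => exact htop
  | and a b iha ihb => exact hinf _ _ iha ihb
  | or a b iha ihb => exact hsup _ _ iha ihb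
  | imp a b iha ihb => exact himp _ _ iha ihb

/-- The value of a formula in a Heyting algebra under an assignment of the variables. -/
def eval {V A : Type} [HeytingAlgebra A] (v : V → A) : PropForm V → A
  | .var x => v x
  | .bot => ⊥
  | .top => ⊤
  | .and a b => eval v a ⊓ eval v b
  | .or a b => eval v a ⊔ eval v b
  | .imp a b => eval v a ⇨ eval v b

theorem eval_sound {V A : Type} [HeytingAlgebra A] (v : V → A) {Γ : Set (PropForm V)}
    {φ : PropForm V} (h : Prov False Γ φ) :
    ∀ c : A, (∀ γ ∈ Γ, c ≤ eval v γ) → c ≤ eval v φ := by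
  induction h with
  | ax hmem => intro c hc; exact hc _ hmem
  | topI => intro c _; exact le_top
  | botE _ ih => intro c hc; exact (ih c hc).trans bot_le
  | andI _ _ ih1 ih2 => intro c hc; exact le_inf (ih1 c hc) (ih2 c hc)
  | andE1 _ ih => intro c hc; exact (ih c hc).trans inf_le_left
  | andE2 _ ih => intro c hc; exact (ih c hc).trans inf_le_right
  | orI1 _ ih => intro c hc; exact (ih c hc).trans le_sup_left
  | orI2 _ ih => intro c hc; exact (ih c hc).trans le_sup_right
  | @orE Γ φ ψ χ _ _ _ ih1 ih2 ih3 =>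
      intro c hc
      have h1 : c ≤ eval v φ ⊔ eval v ψ := ih1 c hc
      have h2 := ih2 (c ⊓ eval v φ) (by
        rintro γ (rfl | hγ)
        exacts [inf_le_right, inf_le_left.trans (hc _ hγ)])
      have h3 := ih3 (c ⊓ eval v ψ) (by
        rintro γ (rfl | hγ)
        exacts [inf_le_right, inf_le_left.trans (hc _ hγ)])
      calc c ≤ c ⊓ (eval v φ ⊔ eval v ψ) := le_inf le_rfl h1
        _ = c ⊓ eval v φ ⊔ c ⊓ eval v ψ := inf_sup_left _ _ _
        _ ≤ _ := sup_le h2 h3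
  | impI _ ih =>
      intro c hc
      refine le_himp_iff.2 (ih _ ?_)
      rintro γ (rfl | hγ)
      exacts [inf_le_right, inf_le_left.trans (hc _ hγ)]
  | impE _ _ ih1 ih2 =>
      intro c hc
      exact (le_inf (ih1 c hc) (ih2 c hc)).trans himp_inf_le
  | em hcl => exact hcl.elim

/-- The universal property of the free Heyting algebra. -/
def lift {V A : Type} [HeytingAlgebra A] (v : V → A) : HeytingHom (Lindenbaum False V) A where
  toFun := Quotient.lift (eval v) (fun _ _ h =>
    le_antisymm (eval_sound v h.1 _ (by rintro γ rfl; exact le_rfl))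
      (eval_sound v h.2 _ (by rintro γ rfl; exact le_rfl)))
  map_sup' := by rintro ⟨a⟩ ⟨b⟩; rfl
  map_inf' := by rintro ⟨a⟩ ⟨b⟩; rfl
  map_bot' := rfl
  map_himp' := by rintro ⟨a⟩ ⟨b⟩; rfl

@[simp] theorem lift_gen {V A : Type} [HeytingAlgebra A] (v : V → A) (x : V) :
    lift v (gen x) = v x := rfl

/-! ### Diagram formulas of finite quotients -/

/-- A surjection from a finitely generated free Heyting algebra onto a finite one is the
quotient by a principal filter: the generator `φ` is the conjunction of the (finite)
operation tables of `A`, written in terms of chosen preimages of its elements. -/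
theorem exists_diagram {V A : Type} [Finite V] [HeytingAlgebra A] [Finite A]
    (e : HeytingHom (Lindenbaum False V) A) (he : Function.Surjective e) :
    ∃ φ : Lindenbaum False V, e φ = ⊤ ∧ ∀ x y, e x ≤ e y → φ ⊓ x ≤ y := by
  classical
  cases nonempty_fintype V
  cases nonempty_fintype A
  choose t ht using he
  let φ : Lindenbaum False V :=
    (Finset.univ.inf fun v : V => gen v ⇔ t (e (gen v))) ⊓
    ((⊥ ⇔ t ⊥) ⊓ ((⊤ ⇔ t ⊤) ⊓
    ((Finset.univ.inf fun p : A × A => (t p.1 ⊓ t p.2) ⇔ t (p.1 ⊓ p.2)) ⊓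
    ((Finset.univ.inf fun p : A × A => (t p.1 ⊔ t p.2) ⇔ t (p.1 ⊔ p.2)) ⊓
    (Finset.univ.inf fun p : A × A => (t p.1 ⇨ t p.2) ⇔ t (p.1 ⇨ p.2))))))
  have hgen : ∀ v, φ ≤ gen v ⇔ t (e (gen v)) := fun v =>
    inf_le_left.trans (Finset.inf_le (f := fun v : V => gen v ⇔ t (e (gen v)))
      (Finset.mem_univ v))
  have hbot : φ ≤ ⊥ ⇔ t ⊥ := inf_le_right.trans inf_le_left
  have htop : φ ≤ ⊤ ⇔ t ⊤ := inf_le_right.trans (inf_le_right.trans inf_le_left)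
  have hinf : ∀ a b, φ ≤ (t a ⊓ t b) ⇔ t (a ⊓ b) := fun a b =>
    inf_le_right.trans (inf_le_right.trans (inf_le_right.trans (inf_le_left.trans
      (Finset.inf_le (f := fun p : A × A => (t p.1 ⊓ t p.2) ⇔ t (p.1 ⊓ p.2))
        (Finset.mem_univ (a, b))))))
  have hsup : ∀ a b, φ ≤ (t a ⊔ t b) ⇔ t (a ⊔ b) := fun a b =>
    inf_le_right.trans (inf_le_right.trans (inf_le_right.trans (inf_le_right.trans
      (inf_le_left.trans
      (Finset.inf_le (f := fun p : A × A => (t p.1 ⊔ t p.2) ⇔ t (p.1 ⊔ p.2))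
        (Finset.mem_univ (a, b)))))))
  have himp : ∀ a b, φ ≤ (t a ⇨ t b) ⇔ t (a ⇨ b) := fun a b =>
    inf_le_right.trans (inf_le_right.trans (inf_le_right.trans (inf_le_right.trans
      (inf_le_right.trans
      (Finset.inf_le (f := fun p : A × A => (t p.1 ⇨ t p.2) ⇔ t (p.1 ⇨ p.2))
        (Finset.mem_univ (a, b)))))))
  have toIff : ∀ x y, φ ≤ x ⇔ y ↔ (φ ⊓ x ≤ y ∧ φ ⊓ y ≤ x) := fun x y => by
    rw [bihimp, le_inf_iff, le_himp_iff, le_himp_iff, and_comm]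
  have main : ∀ x, φ ⊓ x ≤ t (e x) ∧ φ ⊓ t (e x) ≤ x := by
    intro x
    induction x using ind with
    | hgen v => exact (toIff _ _).1 (hgen v)
    | hbot => rw [map_bot]; exact (toIff _ _).1 hbot
    | htop => rw [map_top]; exact (toIff _ _).1 htop
    | hinf a b iha ihb =>
      rw [map_inf]
      have h := (toIff _ _).1 (hinf (e a) (e b))
      constructor
      · refine le_trans (le_inf inf_le_left (le_inf ?_ ?_)) h.1
        · exact le_trans (inf_le_inf_left _ inf_le_left) iha.1
        · exact le_trans (inf_le_inf_left _ inf_le_right) ihb.1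
      · refine le_inf ?_ ?_
        · exact le_trans (le_inf inf_le_left (h.2.trans inf_le_left)) iha.2
        · exact le_trans (le_inf inf_le_left (h.2.trans inf_le_right)) ihb.2
    | hsup a b iha ihb =>
      rw [map_sup]
      have h := (toIff _ _).1 (hsup (e a) (e b))
      constructor
      · refine le_trans (le_inf inf_le_left ?_) h.1
        rw [inf_sup_left]
        exact sup_le_sup iha.1 ihb.1
      · refine (le_inf inf_le_left h.2).trans ?_
        rw [inf_sup_left]
        exact sup_le_sup iha.2 ihb.2
    | himp a b iha ihb =>
      rw [map_himp]
      have h := (toIff _ _).1 (himp (e a) (e b))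
      constructor
      · refine le_trans (le_inf inf_le_left (le_himp_iff.2 ?_)) h.1
        have h1 : φ ⊓ (a ⇨ b) ⊓ t (e a) ≤ a :=
          (le_inf (inf_le_left.trans inf_le_left) inf_le_right).trans iha.2
        have h2 : φ ⊓ (a ⇨ b) ⊓ t (e a) ≤ b :=
          (le_inf (inf_le_left.trans inf_le_right) h1).trans himp_inf_le
        exact (le_inf (inf_le_left.trans inf_le_left) h2).trans ihb.1
      · refine le_himp_iff.2 ?_
        have h1 : φ ⊓ t (e a ⇨ e b) ⊓ a ≤ t (e a) :=
          (le_inf (inf_le_left.trans inf_le_left) inf_le_right).trans iha.1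
        have h2 : φ ⊓ t (e a ⇨ e b) ⊓ a ≤ t (e b) :=
          (le_inf (inf_le_left.trans h.2) h1).trans himp_inf_le
        exact (le_inf (inf_le_left.trans inf_le_left) h2).trans ihb.2
  refine ⟨φ, ?_, fun x y hxy => ?_⟩
  · have bi : ∀ x y, e x = e y → e (x ⇔ y) = ⊤ := fun x y h => by
      rw [bihimp, map_inf, map_himp, map_himp, h, himp_self, inf_idem]
    have fin : ∀ {ι : Type} (s : Finset ι) (F : ι → Lindenbaum False V),
        (∀ i, e (F i) = ⊤) → e (s.inf F) = ⊤ := fun s F hF => by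
      rw [map_finset_inf]
      exact eq_top_iff.2 (Finset.le_inf fun i _ => (hF i).ge)
    simp only [φ, map_inf]
    rw [fin _ _ fun v => bi _ _ (ht _).symm,
      fin _ _ fun p : A × A => bi (t p.1 ⊓ t p.2) _ (by simp [ht]),
      fin _ _ fun p : A × A => bi (t p.1 ⊔ t p.2) _ (by simp [ht]),
      fin _ _ fun p : A × A => bi (t p.1 ⇨ t p.2) _ (by simp [ht]),
      bi _ _ (by simp [ht]), bi _ _ (by simp [ht])]
    simp
  · have hle : φ ⊓ t (e x) ≤ t (e y) := by
      have h := (toIff _ _).1 (hinf (e x) (e y))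
      rw [inf_eq_left.2 hxy] at h
      exact h.2.trans inf_le_right
    have h1 : φ ⊓ x ≤ t (e y) := (le_inf inf_le_left (main x).1).trans hle
    exact (le_inf inf_le_left h1).trans (main y).2

/-! ### Two constructions of Heyting algebras -/

/-- The interval `[a, b]` of a Heyting algebra, for `a ≤ b`; it is a Heyting algebra with
the relative implication `(x ⇨ y) ⊓ b`. -/
def Interval {H : Type} [HeytingAlgebra H] {a b : H} (_ : a ≤ b) : Type :=
  {x : H // a ≤ x ∧ x ≤ b}

instance {H : Type} [HeytingAlgebra H] {a b : H} (hab : a ≤ b) :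
    HeytingAlgebra (Interval hab) where
  le x y := x.1 ≤ y.1
  sup x y := ⟨x.1 ⊔ y.1, x.2.1.trans le_sup_left, sup_le x.2.2 y.2.2⟩
  inf x y := ⟨x.1 ⊓ y.1, le_inf x.2.1 y.2.1, inf_le_left.trans x.2.2⟩
  himp x y := ⟨(x.1 ⇨ y.1) ⊓ b, le_inf (y.2.1.trans le_himp) hab, inf_le_right⟩
  compl x := ⟨(x.1 ⇨ a) ⊓ b, le_inf le_himp hab, inf_le_right⟩
  top := ⟨b, hab, le_rfl⟩
  bot := ⟨a, le_rfl, hab⟩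
  le_refl _ := le_rfl
  le_trans _ _ _ h1 h2 := h1.trans h2
  le_antisymm _ _ h1 h2 := Subtype.ext (h1.antisymm h2)
  le_sup_left _ _ := le_sup_left (α := H)
  le_sup_right _ _ := le_sup_right (α := H)
  sup_le _ _ _ h1 h2 := sup_le (α := H) h1 h2
  inf_le_left _ _ := inf_le_left (α := H)
  inf_le_right _ _ := inf_le_right (α := H)
  le_inf _ _ _ h1 h2 := le_inf (α := H) h1 h2
  le_top x := x.2.2
  bot_le x := x.2.1
  le_himp_iff x y z := by
    change x.1 ≤ (y.1 ⇨ z.1) ⊓ b ↔ x.1 ⊓ y.1 ≤ z.1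
    rw [le_inf_iff, le_himp_iff, and_iff_left x.2.2]
  himp_bot _ := rfl

/-- The Artin glueing of `M` and `A` along a meet-preserving map `f : A → M`: all pairs
`(x, s)` with `x ≤ f s`.  For a Kripke frame `K` with algebra `M` and a frame `U` with
algebra `A`, this is the algebra of the frame obtained by putting `K` below `U`. -/
def Glue {M A : Type} [HeytingAlgebra M] [HeytingAlgebra A] (f : InfTopHom A M) : Type :=
  {x : M × A // x.1 ≤ f x.2}

instance {M A : Type} [HeytingAlgebra M] [HeytingAlgebra A] (f : InfTopHom A M) :
    HeytingAlgebra (Glue f) where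
  le x y := x.1 ≤ y.1
  sup x y := ⟨x.1 ⊔ y.1, sup_le (x.2.trans (OrderHomClass.mono f le_sup_left))
    (y.2.trans (OrderHomClass.mono f le_sup_right))⟩
  inf x y := ⟨x.1 ⊓ y.1, by
    change x.1.1 ⊓ y.1.1 ≤ f (x.1.2 ⊓ y.1.2)
    rw [map_inf]; exact inf_le_inf x.2 y.2⟩
  himp x y := ⟨((x.1.1 ⇨ y.1.1) ⊓ f (x.1.2 ⇨ y.1.2), x.1.2 ⇨ y.1.2), inf_le_right⟩
  compl x := ⟨((x.1.1 ⇨ ⊥) ⊓ f (x.1.2 ⇨ ⊥), x.1.2 ⇨ ⊥), inf_le_right⟩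
  top := ⟨⊤, by change _ ≤ f ⊤; rw [map_top]; exact le_top⟩
  bot := ⟨⊥, bot_le⟩
  le_refl _ := le_rfl
  le_trans _ _ _ h1 h2 := h1.trans h2
  le_antisymm _ _ h1 h2 := Subtype.ext (h1.antisymm h2)
  le_sup_left _ _ := le_sup_left (α := M × A)
  le_sup_right _ _ := le_sup_right (α := M × A)
  sup_le _ _ _ h1 h2 := sup_le (α := M × A) h1 h2
  inf_le_left _ _ := inf_le_left (α := M × A)
  inf_le_right _ _ := inf_le_right (α := M × A)
  le_inf _ _ _ h1 h2 := le_inf (α := M × A) h1 h2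
  le_top x := le_top (α := M × A)
  bot_le x := bot_le (α := M × A)
  le_himp_iff x y z := by
    change x.1.1 ≤ (y.1.1 ⇨ z.1.1) ⊓ f (y.1.2 ⇨ z.1.2) ∧ x.1.2 ≤ y.1.2 ⇨ z.1.2 ↔
      x.1.1 ⊓ y.1.1 ≤ z.1.1 ∧ x.1.2 ⊓ y.1.2 ≤ z.1.2
    rw [le_inf_iff, le_himp_iff, le_himp_iff]
    constructor
    · rintro ⟨⟨h1, -⟩, h2⟩; exact ⟨h1, h2⟩
    · rintro ⟨h1, h2⟩
      exact ⟨⟨h1, x.2.trans (OrderHomClass.mono f (le_himp_iff.2 h2))⟩, h2⟩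
  himp_bot _ := rfl

/-! ### Glueing the free algebra below a finite frame -/

section Core

variable {U : Type} [PartialOrder U] {m : ℕ} (a : Fin m → U)

open Classical in
/-- The frame map along which `H_m` is put below the frame `U` (a point of `U` sees the
points `≤` it).  Every new point sees all points of `U` outside the range of `a`, and it
sees `a i` exactly when it does not force `x_i`; `frameMap a s` is the set of new points all
of whose successors in `U` lie in `s`. -/
noncomputable def frameMap : InfTopHom (LowerSet U) (Lindenbaum False (Fin m)) where
  toFun s := if (∀ d, d ∉ Set.range a → d ∈ s) then
    Finset.univ.inf (fun i => if a i ∈ s then ⊤ else gen i) else ⊥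
  map_inf' s t := by
    by_cases hs : ∀ d, d ∉ Set.range a → d ∈ s
    · by_cases ht : ∀ d, d ∉ Set.range a → d ∈ t
      · rw [if_pos hs, if_pos ht,
          if_pos (fun d hd => LowerSet.mem_inf_iff.2 ⟨hs d hd, ht d hd⟩), ← Finset.inf_inf]
        congr 1
        funext i
        by_cases h1 : a i ∈ s <;> by_cases h2 : a i ∈ t <;> simp [h1, h2]
      · rw [if_neg ht, if_neg fun h => ht fun d hd => (LowerSet.mem_inf_iff.1 (h d hd)).2]
        simp
    · rw [if_neg hs, if_neg fun h => hs fun d hd => (LowerSet.mem_inf_iff.1 (h d hd)).1]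
      simp
  map_top' := by simp

theorem frameMap_eq_bot {s : LowerSet U} {d : U} (hd : d ∉ Set.range a) (h : d ∉ s) :
    frameMap a s = ⊥ :=
  if_neg fun h' => h (h' d hd)

open Classical in
theorem frameMap_of {s : LowerSet U} (h : ∀ d, d ∉ Set.range a → d ∈ s) :
    frameMap a s = Finset.univ.inf (fun i => if a i ∈ s then ⊤ else gen i) :=
  if_pos h

theorem mem_himp_of {s t : LowerSet U} {u : U} (h : u ∈ s ⇨ t) (hu : u ∈ s) : u ∈ t :=
  himp_inf_le (a := s) (b := t) (LowerSet.mem_inf_iff.2 ⟨h, hu⟩)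

theorem mem_himp_iff {s t : LowerSet U} {u : U} :
    u ∈ s ⇨ t ↔ ∀ w ≤ u, w ∈ s → w ∈ t := by
  constructor
  · intro h w hw hs
    exact mem_himp_of ((s ⇨ t).lower hw h) hs
  · intro h
    have : LowerSet.Iic u ≤ s ⇨ t := le_himp_iff.2 fun w hw =>
      h w (LowerSet.mem_Iic_iff.1 (LowerSet.mem_inf_iff.1 hw).1) (LowerSet.mem_inf_iff.1 hw).2
    exact this (LowerSet.mem_Iic_iff.2 le_rfl)

/-- The interval for a finite frame `U` whose algebra of persistent sets is generated by
`n` elements and which has `m` points `a i` seen by no other point, the remaining points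
not all being seen by a single one. -/
theorem interval_of_frame [Finite U] {n : ℕ} (v : Fin n → LowerSet U)
    (hv : Function.Surjective (lift v)) (ha : Function.Injective a)
    (hmax : ∀ i u, a i ≤ u → u = a i) (hD : ∀ u, ∃ d, d ∉ Set.range a ∧ ¬ d ≤ u) :
    ∃ φ ψ : Lindenbaum False (Fin n), φ ≤ ψ ∧
      ∃ h : Lindenbaum False (Fin n) → Lindenbaum False (Fin m),
        (∀ a b, h (a ⊓ b) = h a ⊓ h b) ∧ (∀ a b, h (a ⊔ b) = h a ⊔ h b) ∧
        Function.Surjective h ∧ Set.BijOn h {ρ | φ ≤ ρ ∧ ρ ≤ ψ} Set.univ := by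
  classical
  cases nonempty_fintype U
  have : Finite (LowerSet U) := Finite.of_injective _ (SetLike.coe_injective)
  obtain ⟨φ, hφ, hdiag⟩ := exists_diagram (lift v) hv
  let f := frameMap a
  -- The new points force no variable, so the glued valuation is `⊥` on the part from `H_m`.
  let E : HeytingHom (Lindenbaum False (Fin n)) (Glue f) :=
    lift fun x => ⟨(⊥, v x), bot_le⟩
  let e := lift v
  let g : Lindenbaum False (Fin n) → Lindenbaum False (Fin m) := fun x => (E x).1.1
  have hEe : ∀ x, (E x).1.2 = e x := by
    intro x
    induction x using ind with
    | hgen x => rfl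
    | hbot => rfl
    | htop => rfl
    | hinf x y hx hy =>
      rw [map_inf, map_inf, ← hx, ← hy]; rfl
    | hsup x y hx hy =>
      rw [map_sup, map_sup, ← hx, ← hy]; rfl
    | himp x y hx hy =>
      rw [map_himp, map_himp, ← hx, ← hy]; rfl
  have g_gen : ∀ x, g (gen x) = ⊥ := fun _ => rfl
  have g_bot : g ⊥ = ⊥ := rfl
  have g_top : g ⊤ = ⊤ := by simp only [g]; rw [map_top]; rfl
  have g_inf : ∀ x y, g (x ⊓ y) = g x ⊓ g y := fun x y => by
    simp only [g]; rw [map_inf]; rfl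
  have g_sup : ∀ x y, g (x ⊔ y) = g x ⊔ g y := fun x y => by
    simp only [g]; rw [map_sup]; rfl
  have g_himp : ∀ x y, g (x ⇨ y) = (g x ⇨ g y) ⊓ f (e (x ⇨ y)) := fun x y => by
    rw [map_himp, ← hEe, ← hEe]; simp only [g]; rw [map_himp]; rfl
  have g_le : ∀ x, g x ≤ f (e x) := fun x => by
    rw [← hEe]; exact (E x).2
  have g_mono : ∀ {x y}, x ≤ y → g x ≤ g y := fun {x y} h => by
    rw [← inf_eq_left.2 h, g_inf]; exact inf_le_right
  -- `φ` holds exactly on `U`: it entails that some point of `U` sees the current point.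
  have hcov : φ ≤ Finset.univ.sup fun u : U => (hv (LowerSet.Iic u)).choose := by
    have := hdiag ⊤ (Finset.univ.sup fun u : U => (hv (LowerSet.Iic u)).choose) (by
      rw [map_finset_sup]
      intro u _
      have h1 : LowerSet.Iic u ≤ Finset.univ.sup
          (lift v ∘ fun u : U => (hv (LowerSet.Iic u)).choose) := by
        have h2 := Finset.le_sup (f := lift v ∘ fun u : U => (hv (LowerSet.Iic u)).choose)
          (Finset.mem_univ u)
        rwa [Function.comp, (hv (LowerSet.Iic u)).choose_spec] at h2
      exact h1 (LowerSet.mem_Iic_iff.2 le_rfl))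
    simpa using this
  have g_phi : g φ = ⊥ := by
    refine le_bot_iff.1 ((g_mono hcov).trans ?_)
    have : ∀ s : Finset U, g (s.sup fun u : U => (hv (LowerSet.Iic u)).choose) ≤ ⊥ := by
      intro s
      induction s using Finset.induction with
      | empty => simp [g_bot]
      | insert u s _ ih =>
        rw [Finset.sup_insert, g_sup]
        refine sup_le ((g_le _).trans ?_) ih
        obtain ⟨d, hd, hdu⟩ := hD u
        rw [show e _ = _ from (hv (LowerSet.Iic u)).choose_spec]
        exact (frameMap_eq_bot a hd (by simpa using hdu)).le
    exact this _
  -- `α u` is the largest element not forced at `u`.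
  have hα : ∀ u : U, ∃ α : Lindenbaum False (Fin n), (∀ χ, u ∉ e χ → χ ≤ α) ∧
      (∀ w, w ∈ e α ↔ ¬ u ≤ w) ∧ g α = f (e α) := by
    intro u
    obtain ⟨β, hβ⟩ := hv (LowerSet.Iic u)
    obtain ⟨γ, hγ⟩ := hv (LowerSet.Iio u)
    have hw : ∀ w, w ∈ e (φ ⊓ β ⇨ γ) ↔ ¬ u ≤ w := by
      intro w
      have : e (φ ⊓ β ⇨ γ) = (LowerSet.Iic u ⇨ LowerSet.Iio u) := by
        simp only [e]; rw [map_himp, map_inf, hφ, hβ, hγ, top_inf_eq]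
      rw [this, mem_himp_iff]
      simp only [LowerSet.mem_Iic_iff, LowerSet.mem_Iio_iff]
      exact ⟨fun h hu => lt_irrefl _ (h u hu le_rfl),
        fun h x hx hxu => lt_of_le_of_ne hxu (by rintro rfl; exact h hx)⟩
    refine ⟨φ ⊓ β ⇨ γ, fun χ hχ => ?_, hw, ?_⟩
    · rw [le_himp_iff, inf_left_comm]
      refine hdiag _ _ ?_
      rw [map_inf, hβ, hγ]
      intro w hw
      obtain ⟨h1, h2⟩ := LowerSet.mem_inf_iff.1 hw
      refine LowerSet.mem_Iio_iff.2 (lt_of_le_of_ne (LowerSet.mem_Iic_iff.1 h2) ?_)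
      rintro rfl
      exact hχ h1
    · rw [g_himp, g_inf, g_phi]; simp
  choose α α_max α_mem g_α using hα
  let D : Finset U := Finset.univ.filter fun d => d ∉ Set.range a
  let ψ : Lindenbaum False (Fin n) :=
    (D.inf fun d => α d ⇨ φ) ⊓ (Finset.univ.inf fun x : Fin n => gen x ⇨ φ)
  have hφψ : φ ≤ ψ :=
    le_inf (Finset.le_inf fun _ _ => le_himp) (Finset.le_inf fun _ _ => le_himp)
  have hψα : ∀ d, d ∉ Set.range a → α d ⊓ ψ ≤ φ := fun d hd => by
    have : ψ ≤ α d ⇨ φ := inf_le_left.trans (Finset.inf_le (f := fun d => α d ⇨ φ)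
      (by simpa [D] using hd))
    rw [inf_comm]; exact le_himp_iff.1 this
  have hψx : ∀ x, gen x ⊓ ψ ≤ φ := fun x => by
    have : ψ ≤ gen x ⇨ φ := inf_le_right.trans
      (Finset.inf_le (f := fun x : Fin n => gen x ⇨ φ) (Finset.mem_univ x))
    rw [inf_comm]; exact le_himp_iff.1 this
  have e_top : ∀ {x}, φ ≤ x → e x = ⊤ := fun {x} h =>
    top_le_iff.1 (hφ ▸ OrderHomClass.mono e h)
  have g_finf : ∀ {ι : Type} (s : Finset ι) (F : ι → Lindenbaum False (Fin n)),
      g (s.inf F) = s.inf fun i => g (F i) := fun s F => by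
    induction s using Finset.induction with
    | empty => simp [g_top]
    | insert i s _ ih => rw [Finset.inf_insert, g_inf, ih, Finset.inf_insert]
  have g_himp_phi : ∀ x, g x = ⊥ → g (x ⇨ φ) = ⊤ := fun x hx => by
    rw [g_himp, hx, e_top le_himp, map_top]; simp
  have g_psi : g ψ = ⊤ := by
    rw [g_inf, g_finf, g_finf, eq_top_iff]
    refine le_inf (Finset.le_inf fun d hd => ?_) (Finset.le_inf fun x _ => ?_)
    · refine (g_himp_phi _ ?_).ge
      rw [g_α]
      exact frameMap_eq_bot a (by simpa [D] using hd) fun h => (α_mem d d).1 h le_rfl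
    · exact (g_himp_phi _ (g_gen x)).ge
  have g_αa : ∀ i, g (α (a i)) = gen i := by
    intro i
    have hmem : ∀ w, w ∈ e (α (a i)) ↔ w ≠ a i := fun w => by
      rw [α_mem, not_iff_not]
      exact ⟨hmax i w, fun h => h.ge⟩
    rw [g_α]
    refine (frameMap_of a fun d hd => (hmem d).2 fun h => hd ⟨i, h.symm⟩).trans ?_
    refine le_antisymm ((Finset.inf_le (Finset.mem_univ i)).trans ?_)
      (Finset.le_inf fun j _ => ?_)
    · rw [if_neg fun h => (hmem _).1 h rfl]
    · by_cases hj : j = i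
      · subst hj; split_ifs <;> simp
      · rw [if_pos ((hmem _).2 fun h => hj (ha h))]; exact le_top
  -- `T` is the inverse of `g` on the interval.
  let T : HeytingHom (Lindenbaum False (Fin m)) (Interval hφψ) :=
    lift fun i => ⟨α (a i) ⊓ ψ ⊔ φ, le_sup_right, sup_le inf_le_right hφψ⟩
  have T_gen : ∀ i, (T (gen i)).1 = α (a i) ⊓ ψ ⊔ φ := fun _ => rfl
  have T_bot : (T ⊥).1 = φ := rfl
  have T_top : (T ⊤).1 = ψ := by rw [map_top]; rfl
  have T_inf : ∀ x y, (T (x ⊓ y)).1 = (T x).1 ⊓ (T y).1 := fun x y => by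
    rw [map_inf]; rfl
  have T_sup : ∀ x y, (T (x ⊔ y)).1 = (T x).1 ⊔ (T y).1 := fun x y => by
    rw [map_sup]; rfl
  have T_himp : ∀ x y, (T (x ⇨ y)).1 = ((T x).1 ⇨ (T y).1) ⊓ ψ := fun x y => by
    rw [map_himp]; rfl
  have gT : ∀ x, g (T x).1 = x := by
    intro x
    induction x using ind with
    | hgen i => rw [T_gen, g_sup, g_inf, g_psi, g_phi, g_αa]; simp
    | hbot => rw [T_bot, g_phi]
    | htop => rw [T_top, g_psi]
    | hinf x y hx hy => rw [T_inf, g_inf, hx, hy]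
    | hsup x y hx hy => rw [T_sup, g_sup, hx, hy]
    | himp x y hx hy =>
      rw [T_himp, g_inf, g_himp, g_psi, hx, hy, e_top ((T y).2.1.trans le_himp), map_top]
      simp
  have T_finf : ∀ (s : Finset (Fin m)) (F : Fin m → Lindenbaum False (Fin m)) (x),
      x ≤ ψ → (∀ i ∈ s, x ≤ (T (F i)).1) → x ≤ (T (s.inf F)).1 := fun s F x hx => by
    induction s using Finset.induction with
    | empty => intro _; rw [Finset.inf_empty, T_top]; exact hx
    | insert i s _ ih =>
      intro h
      rw [Finset.inf_insert, T_inf]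
      exact le_inf (h i (by simp)) (ih fun j hj => h j (by simp [hj]))
  have T_mono : ∀ {x y}, x ≤ y → (T x).1 ≤ (T y).1 := fun {x y} h => by
    rw [← inf_eq_left.2 h, T_inf]; exact inf_le_right
  have Tf_ge : ∀ χ, χ ⊓ ψ ⊔ φ ≤ (T (f (e χ))).1 := by
    intro χ
    by_cases h : ∀ d, d ∉ Set.range a → d ∈ e χ
    · rw [show f (e χ) = _ from frameMap_of a h]
      refine T_finf _ _ _ (sup_le inf_le_right hφψ) fun i _ => ?_
      split_ifs with hi
      · rw [T_top]; exact sup_le inf_le_right hφψ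
      · rw [T_gen]; exact sup_le_sup_right (inf_le_inf_right _ (α_max _ _ hi)) _
    · push Not at h
      obtain ⟨d, hd, hdχ⟩ := h
      exact (sup_le ((inf_le_inf_right _ (α_max _ _ hdχ)).trans (hψα d hd)) le_rfl).trans
        (T _).2.1
  have Tg : ∀ x, x ⊓ ψ ⊔ φ = (T (g x)).1 := by
    intro x
    induction x using ind with
    | hgen i => rw [g_gen, T_bot]; exact sup_eq_right.2 (hψx i)
    | hbot => rw [g_bot, T_bot]; simp
    | htop => rw [g_top, T_top]; simpa using hφψ
    | hinf x y hx hy => rw [g_inf, T_inf, ← hx, ← hy, ← sup_inf_right, inf_inf_distrib_right]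
    | hsup x y hx hy => rw [g_sup, T_sup, ← hx, ← hy, inf_sup_right, sup_sup_distrib_right]
    | himp x y hx hy =>
      rw [g_himp, T_inf, T_himp, ← hx, ← hy]
      refine le_antisymm (le_inf (sup_le (le_inf ?_ inf_le_right) (le_inf ?_ hφψ)) (Tf_ge _)) ?_
      · rw [le_himp_iff, inf_sup_left]
        refine sup_le (le_sup_of_le_left (le_inf ?_ (inf_le_left.trans inf_le_right)))
          (le_sup_of_le_right inf_le_right)
        exact (le_inf (inf_le_left.trans inf_le_left) (inf_le_right.trans inf_le_left)).trans
          himp_inf_le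
      · exact le_sup_right.trans le_himp
      · by_cases h : ∀ d, d ∉ Set.range a → d ∈ e (x ⇨ y)
        · -- `κ` says that no `a i` refuting `x ⇨ y` is seen.
          let κ : Lindenbaum False (Fin n) := Finset.univ.inf fun i : Fin m =>
            if a i ∈ e (x ⇨ y) then ⊤ else α (a i)
          have hκ : (T (f (e (x ⇨ y)))).1 ≤ κ ⊔ φ := by
            rw [show f (e (x ⇨ y)) = _ from frameMap_of a h, Finset.inf_sup_distrib_right]
            refine Finset.le_inf fun i _ => ?_
            refine (T_mono (Finset.inf_le (Finset.mem_univ i))).trans ?_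
            split_ifs with hi
            · simp
            · rw [T_gen]; exact sup_le_sup_right inf_le_left _
          have hU : φ ⊓ (κ ⊓ x) ≤ y := by
            refine hdiag _ _ fun u hu => ?_
            rw [map_inf] at hu
            obtain ⟨hu1, hu2⟩ := LowerSet.mem_inf_iff.1 hu
            have hxy : u ∈ e (x ⇨ y) := by
              by_contra hcon
              have hr : u ∈ Set.range a := by
                by_contra hr; exact hcon (h u hr)
              obtain ⟨i, rfl⟩ := hr
              have h1 : κ ≤ α (a i) :=
                (Finset.inf_le (Finset.mem_univ i)).trans (by rw [if_neg hcon])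
              exact (α_mem (a i) (a i)).1 (OrderHomClass.mono e h1 hu1) le_rfl
            simp only [e] at hxy
            rw [map_himp] at hxy
            exact mem_himp_of hxy hu2
          have hκ' : ((x ⊓ ψ ⊔ φ) ⇨ (y ⊓ ψ ⊔ φ)) ⊓ ψ ⊓ κ ≤ (x ⇨ y) ⊓ ψ := by
            refine le_inf (le_himp_iff.2 ?_) (inf_le_left.trans inf_le_right)
            set z := ((x ⊓ ψ ⊔ φ) ⇨ (y ⊓ ψ ⊔ φ)) ⊓ ψ ⊓ κ ⊓ x with hz
            have z1 : z ≤ (x ⊓ ψ ⊔ φ) ⇨ (y ⊓ ψ ⊔ φ) :=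
              inf_le_left.trans (inf_le_left.trans inf_le_left)
            have z2 : z ≤ ψ := inf_le_left.trans (inf_le_left.trans inf_le_right)
            have z3 : z ≤ κ := inf_le_left.trans inf_le_right
            have z4 : z ≤ x := inf_le_right
            have z5 : z ≤ y ⊓ ψ ⊔ φ :=
              (le_inf z1 ((le_inf z4 z2).trans le_sup_left)).trans himp_inf_le
            calc z ≤ z ⊓ (y ⊓ ψ ⊔ φ) := le_inf le_rfl z5
              _ = z ⊓ (y ⊓ ψ) ⊔ z ⊓ φ := inf_sup_left _ _ _
              _ ≤ y := sup_le (inf_le_right.trans inf_le_left)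
                ((le_inf inf_le_right (inf_le_left.trans (le_inf z3 z4))).trans hU)
          refine (inf_le_inf_left _ hκ).trans ?_
          rw [inf_sup_left]
          exact sup_le_sup hκ' inf_le_right
        · push Not at h
          obtain ⟨d, hd, hdχ⟩ := h
          rw [show f (e (x ⇨ y)) = ⊥ from frameMap_eq_bot a hd hdχ, T_bot]
          exact inf_le_right.trans le_sup_right
  have Tg' : ∀ x, φ ≤ x → x ≤ ψ → (T (g x)).1 = x := fun x h1 h2 => by
    rw [← Tg, inf_eq_left.2 h2, sup_eq_left.2 h1]
  refine ⟨φ, ψ, hφψ, g, g_inf, g_sup, fun y => ⟨_, gT y⟩, fun _ _ => trivial, ?_, ?_⟩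
  · intro x hx y hy hxy
    rw [← Tg' x hx.1 hx.2, ← Tg' y hy.1 hy.2, hxy]
  · intro y _
    exact ⟨(T y).1, (T y).2, gT y⟩

end Core

/-! ### Two-generated finite frames with many points seen by no other point -/

/-- The first `N` steps of the Rieger–Nishimura ladder, with a leaf attached to each:
`⟨i, false⟩` is the `i`-th point of the ladder and `⟨i, true⟩` the leaf attached to it. -/
@[ext]
structure Ladder (N : ℕ) : Type where
  /-- The position on the ladder. -/
  idx : Fin N
  /-- Whether the point is a leaf. -/
  leaf : Bool

namespace Ladder

variable {N : ℕ}

instance : Finite (Ladder N) :=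
  Finite.of_injective (fun u => (u.idx, u.leaf)) fun u w h => by
    simp only [Prod.mk.injEq] at h
    exact Ladder.ext h.1 h.2

/-- `x ≤ y` means that `y` sees `x`.  The `j`-th ladder point sees the `i`-th one iff `i = j`
or `i + 2 ≤ j`; a leaf sees itself and what its ladder point sees, and no other point sees it. -/
instance : PartialOrder (Ladder N) where
  le x y := x = y ∨ (x.leaf = false ∧ (x.idx.1 = y.idx.1 ∨ x.idx.1 + 2 ≤ y.idx.1))
  le_refl _ := Or.inl rfl
  le_trans := by
    rintro x y z (rfl | ⟨h1, h2⟩) (rfl | ⟨h3, h4⟩)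
    · exact Or.inl rfl
    · exact Or.inr ⟨h3, h4⟩
    · exact Or.inr ⟨h1, h2⟩
    · exact Or.inr ⟨h1, by omega⟩
  le_antisymm := by
    rintro x y (rfl | ⟨h1, h2⟩) (h | ⟨h3, h4⟩)
    · rfl
    · rfl
    · exact h.symm
    · exact Ladder.ext (Fin.ext (by omega)) (h1.trans h3.symm)

theorem le_def {x y : Ladder N} :
    x ≤ y ↔ x = y ∨ (x.leaf = false ∧ (x.idx.1 = y.idx.1 ∨ x.idx.1 + 2 ≤ y.idx.1)) := Iff.rfl

/-- The set of all ladder points. -/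
def Q (N : ℕ) : LowerSet (Ladder N) where
  carrier := {u | u.leaf = false}
  lower' := by
    rintro x y (rfl | ⟨h1, h2⟩) (h : _ = _)
    exacts [h, h1]

/-- What the `k`-th ladder point sees. -/
def B (N k : ℕ) : LowerSet (Ladder N) where
  carrier := {u | u.leaf = false ∧ (u.idx.1 = k ∨ u.idx.1 + 2 ≤ k)}
  lower' := by
    rintro x y (rfl | ⟨h1, h2⟩) ⟨h3, h4⟩
    exacts [⟨h3, h4⟩, ⟨h1, by omega⟩]

/-- The first `k` ladder points. -/
def I (N k : ℕ) : LowerSet (Ladder N) where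
  carrier := {u | u.leaf = false ∧ u.idx.1 < k}
  lower' := by
    rintro x y (rfl | ⟨h1, h2⟩) ⟨h3, h4⟩
    exacts [⟨h3, h4⟩, ⟨h1, by omega⟩]

/-- What the `k`-th leaf sees. -/
def C (N k : ℕ) : LowerSet (Ladder N) where
  carrier := {u | u.idx.1 = k ∨ (u.leaf = false ∧ u.idx.1 + 2 ≤ k)}
  lower' := by
    rintro x y (rfl | ⟨h1, h2⟩) h
    · exact h
    · have h : x.idx.1 = k ∨ (x.leaf = false ∧ x.idx.1 + 2 ≤ k) := h
      change y.idx.1 = k ∨ (y.leaf = false ∧ y.idx.1 + 2 ≤ k)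
      simp only [h1, true_and]
      omega

/-- All ladder points and the first `k` leaves. -/
def Z (N k : ℕ) : LowerSet (Ladder N) where
  carrier := {u | u.leaf = false ∨ u.idx.1 < k}
  lower' := by
    rintro x y (rfl | ⟨h1, h2⟩) h
    · exact h
    · exact Or.inl h1

theorem mem_Q {u : Ladder N} : u ∈ Q N ↔ u.leaf = false := Iff.rfl
theorem mem_B {k : ℕ} {u : Ladder N} :
    u ∈ B N k ↔ u.leaf = false ∧ (u.idx.1 = k ∨ u.idx.1 + 2 ≤ k) := Iff.rfl
theorem mem_I {k : ℕ} {u : Ladder N} : u ∈ I N k ↔ u.leaf = false ∧ u.idx.1 < k := Iff.rfl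
theorem mem_C {k : ℕ} {u : Ladder N} :
    u ∈ C N k ↔ u.idx.1 = k ∨ (u.leaf = false ∧ u.idx.1 + 2 ≤ k) := Iff.rfl
theorem mem_Z {k : ℕ} {u : Ladder N} : u ∈ Z N k ↔ u.leaf = false ∨ u.idx.1 < k := Iff.rfl

theorem I_succ (k : ℕ) : I N (k + 1) = I N k ⊔ B N k := by
  ext u
  simp only [SetLike.mem_coe, LowerSet.mem_sup_iff, mem_I, mem_B]
  grind

theorem Z_succ (k : ℕ) : Z N (k + 1) = Z N k ⊔ C N k := by
  ext u
  simp only [SetLike.mem_coe, LowerSet.mem_sup_iff, mem_Z, mem_C]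
  grind

theorem B_one : B N 1 = Q N ⊓ (B N 0 ⇨ ⊥) := by
  ext u
  simp only [SetLike.mem_coe, LowerSet.mem_inf_iff, mem_himp_iff, mem_Q, mem_B,
    LowerSet.notMem_bot]
  constructor
  · rintro ⟨h1, h2⟩
    refine ⟨h1, fun w hw h => ?_⟩
    rcases le_def.1 hw with rfl | hw <;> omega
  · rintro ⟨h1, h2⟩
    refine ⟨h1, ?_⟩
    by_contra hne
    have hN : 0 < N := u.idx.pos
    refine h2 (⟨⟨0, hN⟩, false⟩ : Ladder N) (Or.inr ⟨rfl, ?_⟩) ⟨rfl, Or.inl rfl⟩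
    change 0 = _ ∨ 0 + 2 ≤ _
    omega

/-- The point `k + 2` of the ladder sees exactly the ladder points that do not see `k + 1`. -/
theorem B_add_two (k : ℕ) : B N (k + 2) = Q N ⊓ (B N (k + 1) ⇨ I N k) := by
  ext u
  simp only [SetLike.mem_coe, LowerSet.mem_inf_iff, mem_himp_iff, mem_Q, mem_B, mem_I]
  constructor
  · rintro ⟨h1, h2⟩
    refine ⟨h1, fun w hw h => ⟨h.1, ?_⟩⟩
    rcases le_def.1 hw with rfl | hw <;> omega
  · rintro ⟨h1, h2⟩
    refine ⟨h1, ?_⟩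
    by_contra hne
    have hN : k + 1 < N := by have := u.idx.2; omega
    have h3 := (h2 (⟨⟨k + 1, hN⟩, false⟩ : Ladder N) (Or.inr ⟨rfl, by
      change k + 1 = _ ∨ k + 1 + 2 ≤ _
      omega⟩) ⟨rfl, Or.inl rfl⟩).2
    change k + 1 < k at h3
    omega

/-- The `k`-th leaf is the only leaf whose ladder points are all seen by the `k`-th one and
which is not among the first `k - 1` leaves. -/
theorem C_eq (k : ℕ) : C N k = (Q N ⇨ B N k) ⊓ (Z N (k - 1) ⇨ Q N) := by
  ext u
  simp only [SetLike.mem_coe, LowerSet.mem_inf_iff, mem_himp_iff, mem_Q, mem_B, mem_C, mem_Z]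
  constructor
  · intro h
    refine ⟨fun w hw h' => ⟨h', ?_⟩, fun w hw h' => ?_⟩
    · rcases le_def.1 hw with rfl | hw <;> omega
    · rcases le_def.1 hw with rfl | hw
      · rcases h' with h' | h'
        · exact h'
        · rcases h with h | h
          · omega
          · exact h.1
      · exact hw.1
  · rintro ⟨h1, h2⟩
    have h3 := (h1 (⟨u.idx, false⟩ : Ladder N) (Or.inr ⟨rfl, Or.inl rfl⟩) rfl).2
    change u.idx.1 = k ∨ u.idx.1 + 2 ≤ k at h3
    rcases h3 with h3 | h3
    · exact Or.inl h3
    · exact Or.inr ⟨h2 u le_rfl (Or.inr (by omega)), h3⟩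

/-- The valuation of the variables on the ladder: the first is true at the point `0` only,
the second on the ladder, and all others nowhere. -/
def val (n N : ℕ) (x : Fin n) : LowerSet (Ladder N) :=
  if x.1 = 0 then B N 0 else if x.1 = 1 then Q N else ⊥

theorem lift_val_surjective {n : ℕ} (hn : 2 ≤ n) : Function.Surjective (lift (val n N)) := by
  classical
  let L : Set (LowerSet (Ladder N)) := Set.range (lift (val n N))
  have Linf : ∀ {s t}, s ∈ L → t ∈ L → s ⊓ t ∈ L := by
    rintro _ _ ⟨x, rfl⟩ ⟨y, rfl⟩; exact ⟨x ⊓ y, map_inf _ _ _⟩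
  have Lsup : ∀ {s t}, s ∈ L → t ∈ L → s ⊔ t ∈ L := by
    rintro _ _ ⟨x, rfl⟩ ⟨y, rfl⟩; exact ⟨x ⊔ y, map_sup _ _ _⟩
  have Limp : ∀ {s t}, s ∈ L → t ∈ L → s ⇨ t ∈ L := by
    rintro _ _ ⟨x, rfl⟩ ⟨y, rfl⟩; exact ⟨x ⇨ y, map_himp _ _ _⟩
  have Lbot : ⊥ ∈ L := ⟨⊥, map_bot _⟩
  have LQ : Q N ∈ L := ⟨gen ⟨1, by omega⟩, by simp [val]⟩
  have LB0 : B N 0 ∈ L := ⟨gen ⟨0, by omega⟩, by simp [val]⟩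
  have LI0 : I N 0 ∈ L := by
    have : I N 0 = ⊥ := by ext u; simp [mem_I]
    rw [this]; exact Lbot
  have LBI : ∀ k, B N k ∈ L ∧ B N (k + 1) ∈ L ∧ I N k ∈ L := by
    intro k
    induction k with
    | zero => exact ⟨LB0, B_one (N := N) ▸ Linf LQ (Limp LB0 Lbot), LI0⟩
    | succ k ih =>
      obtain ⟨h1, h2, h3⟩ := ih
      exact ⟨h2, B_add_two (N := N) k ▸ Linf LQ (Limp h2 h3), I_succ (N := N) k ▸ Lsup h3 h1⟩
  have LCof : ∀ k, Z N (k - 1) ∈ L → C N k ∈ L := fun k h =>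
    C_eq (N := N) k ▸ Linf (Limp LQ (LBI k).1) (Limp h LQ)
  have LZ0 : Z N 0 ∈ L := by
    have : Z N 0 = Q N := by ext u; simp [mem_Z, mem_Q]
    rw [this]; exact LQ
  have LZ : ∀ k, Z N k ∈ L ∧ Z N (k - 1) ∈ L := by
    intro k
    induction k with
    | zero => exact ⟨LZ0, LZ0⟩
    | succ k ih => exact ⟨Z_succ (N := N) k ▸ Lsup ih.1 (LCof k ih.2), ih.1⟩
  have LIic : ∀ u : Ladder N, LowerSet.Iic u ∈ L := by
    rintro ⟨i, b⟩
    cases b with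
    | false =>
      have : LowerSet.Iic (⟨i, false⟩ : Ladder N) = B N i := by
        ext u
        simp only [SetLike.mem_coe, LowerSet.mem_Iic_iff, mem_B, le_def]
        constructor
        · rintro (rfl | h)
          · exact ⟨rfl, Or.inl rfl⟩
          · exact h
        · exact Or.inr
      rw [this]; exact (LBI _).1
    | true =>
      have : LowerSet.Iic (⟨i, true⟩ : Ladder N) = C N i := by
        ext u
        simp only [SetLike.mem_coe, LowerSet.mem_Iic_iff, mem_C, le_def]
        constructor
        · rintro (rfl | ⟨h1, h2 | h2⟩)
          · exact Or.inl rfl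
          · exact Or.inl h2
          · exact Or.inr ⟨h1, h2⟩
        · rintro (h | ⟨h1, h2⟩)
          · obtain ⟨j, b⟩ := u
            obtain rfl : j = i := Fin.ext h
            cases b with
            | false => exact Or.inr ⟨rfl, Or.inl rfl⟩
            | true => exact Or.inl rfl
          · exact Or.inr ⟨h1, Or.inr h2⟩
      rw [this]; exact LCof _ (LZ _).2
  intro s
  cases nonempty_fintype (Ladder N)
  have hs : s = (Finset.univ.filter (· ∈ s)).sup LowerSet.Iic := by
    refine le_antisymm (fun u hu => ?_) (Finset.sup_le fun u hu => ?_)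
    · have h : LowerSet.Iic u ≤ (Finset.univ.filter (· ∈ s)).sup LowerSet.Iic :=
        Finset.le_sup (by simpa using hu)
      exact h (LowerSet.mem_Iic_iff.2 le_rfl)
    · exact LowerSet.Iic_le.2 (by simpa using hu)
  change s ∈ L
  rw [hs]
  exact Finset.sup_induction Lbot (fun _ h1 _ h2 => Lsup h1 h2) fun u _ => LIic u

end Ladder

end FreeHeyting

/-- For `n ≥ 2` and `m ≥ 1` there are `φ ≤ ψ` in the free Heyting algebra `H_n` such that
the interval `[φ, ψ]` is lattice-isomorphic to `H_m`, via an isomorphism that extends to a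
surjective lattice homomorphism from `H_n` onto `H_m`.  (The lattice isomorphism from the
interval onto `H_m` is expressed as the bijectivity on the interval of the globally
`∧`- and `∨`-preserving map `h`.) -/
theorem interval_iso_free_heyting (n m : ℕ) (hn : 2 ≤ n) (hm : 1 ≤ m) :
    ∃ φ ψ : Lindenbaum False (Fin n), Lindenbaum.le φ ψ ∧
      ∃ h : Lindenbaum False (Fin n) → Lindenbaum False (Fin m),
        (∀ a b, h (Lindenbaum.inf a b) = Lindenbaum.inf (h a) (h b)) ∧
        (∀ a b, h (Lindenbaum.sup a b) = Lindenbaum.sup (h a) (h b)) ∧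
        Function.Surjective h ∧
        Set.BijOn h {ρ : Lindenbaum False (Fin n) | Lindenbaum.le φ ρ ∧ Lindenbaum.le ρ ψ}
          (Set.univ : Set (Lindenbaum False (Fin m))) := by
  obtain ⟨φ, ψ, hle, h, h1, h2, h3, h4⟩ := FreeHeyting.interval_of_frame
    (U := FreeHeyting.Ladder (m + 2)) (m := m)
    (fun i => (⟨⟨i.1, by omega⟩, true⟩ : FreeHeyting.Ladder (m + 2)))
    (FreeHeyting.Ladder.val n (m + 2)) (FreeHeyting.Ladder.lift_val_surjective hn)
    (fun i j hij => Fin.ext (congrArg (fun x => x.idx.1) hij))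
    (fun i u hu => by
      rcases FreeHeyting.Ladder.le_def.1 hu with h | h
      · exact h.symm
      · exact absurd h.1 (by simp))
    (fun u => by
      -- The last two leaves lie outside the range, and no point sees both.
      have key : ∀ k : Fin (m + 2), m ≤ k.1 → u.idx ≠ k →
          ∃ d : FreeHeyting.Ladder (m + 2), d ∉ Set.range (fun i : Fin m =>
            (⟨⟨i.1, by omega⟩, true⟩ : FreeHeyting.Ladder (m + 2))) ∧ ¬ d ≤ u := by
        intro k hk hu
        refine ⟨⟨k, true⟩, ?_, fun h => ?_⟩
        · rintro ⟨i, hi⟩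
          have : i.1 = k.1 := congrArg (fun x => x.idx.1) hi
          omega
        · rcases FreeHeyting.Ladder.le_def.1 h with h | h
          · exact hu (h ▸ rfl)
          · exact absurd h.1 (by simp)
      by_cases hu : u.idx.1 = m
      · exact key ⟨m + 1, by omega⟩ (by simp) fun h => by
          have := congrArg Fin.val h
          simp at this; omega
      · exact key ⟨m, by omega⟩ le_rfl fun h => hu (congrArg Fin.val h))
  exact ⟨φ, ψ, hle, h, h1, h2, h3, h4⟩
end

section
/- Let m ≥ 2 and n ≥ 1, and suppose there is a level i of Bellissima's Kripke model K_n and a set A ⊆ Lev^n_i with |A| = m such that each α ∈ A has some immediate successor that is not above any other element of A. Then there exist φ ≤ ψ in H_n such that the interval [φ,ψ] is lattice-isomorphic to H_m, and the lattice isomorphism from [φ,ψ] to H_m extends to a surjective lattice homomorphism from H_n onto H_m. -/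
/-- Validity of a pair `⟨T, U⟩` as a node of level `i + 1` in Bellissima's construction:
`T` is an antichain of nodes of level `≤ i` containing at least one node of level `i`,
`U` is a set of variables forced at every node of `T`, and `U` is a proper subset of the
variables forced at `β` whenever `T = {β}`. -/
def BellissimaValid {Node : Type} {n : ℕ} (le : Node → Node → Prop) (level : Node → ℕ)
    (val : Node → Finset (Fin n)) (i : ℕ) (T : Finset Node) (U : Finset (Fin n)) : Prop :=
  (∀ a ∈ T, level a ≤ i) ∧ (∃ a ∈ T, level a = i) ∧
  (∀ a ∈ T, ∀ b ∈ T, le a b → a = b) ∧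
  (∀ a ∈ T, U ⊆ val a) ∧
  (∀ β, T = {β} → U ⊂ val β)

/-- Bellissima's Kripke model `K_n` for `n` propositional variables, presented through its
characteristic properties: a partial order of nodes, each of a finite level, each forcing a
set `val` of variables (monotonicity of forcing is `val_mono`); the nodes of level `0` are
exactly the (pairwise incomparable) subsets `U ⊆ {x_1, …, x_n}`, forcing exactly the
variables of `U`; the nodes of level `i + 1` are exactly the pairs `⟨T, U⟩` that are valid
in the sense of `BellissimaValid`, forcing exactly the variables of `U` and whose strict
successors are exactly the nodes lying above some element of `T`. -/
structure BellissimaModel (n : ℕ) where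
  Node : Type
  le : Node → Node → Prop
  le_refl : ∀ a, le a a
  le_trans : ∀ a b c, le a b → le b c → le a c
  le_antisymm : ∀ a b, le a b → le b a → a = b
  level : Node → ℕ
  val : Node → Finset (Fin n)
  val_mono : ∀ a b, le a b → val a ⊆ val b
  level_anti : ∀ a b, le a b → level b ≤ level a
  level_finite : ∀ m : ℕ, {a : Node | level a = m}.Finite
  node0 : Finset (Fin n) → Node
  node0_level : ∀ U, level (node0 U) = 0
  node0_val : ∀ U, val (node0 U) = U
  node0_inj : Function.Injective node0
  node0_surj : ∀ a, level a = 0 → ∃ U, a = node0 U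
  node0_antichain : ∀ U U', le (node0 U) (node0 U') → U = U'
  node : Finset Node → Finset (Fin n) → Node
  node_level : ∀ i T U, BellissimaValid le level val i T U → level (node T U) = i + 1
  node_val : ∀ i T U, BellissimaValid le level val i T U → val (node T U) = U
  node_succ : ∀ i T U, BellissimaValid le level val i T U →
    ∀ b, (le (node T U) b ∧ node T U ≠ b) ↔ ∃ a ∈ T, le a b
  node_inj : ∀ i T U i' T' U', BellissimaValid le level val i T U →
    BellissimaValid le level val i' T' U' → node T U = node T' U' → T = T' ∧ U = U'
  node_surj : ∀ b i, level b = i + 1 → ∃ T U, BellissimaValid le level val i T U ∧ b = node T U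

/-- The level sets `Lev^n_m` of Bellissima's model. -/
def BellissimaModel.Lev {n : ℕ} (M : BellissimaModel n) (m : ℕ) : Set M.Node :=
  {a : M.Node | M.level a = m}


/-! ### Kripke semantics -/

/-- An intuitionistic Kripke model over the variables `V`: a preorder of worlds with a
monotone valuation. -/
structure KModel (V : Type) where
  /-- The worlds. -/
  W : Type
  /-- The accessibility preorder. -/
  le : W → W → Prop
  refl : ∀ w, le w w
  trans : ∀ {a b c}, le a b → le b c → le a c
  /-- The valuation. -/
  val : W → V → Prop
  mono : ∀ {a b}, le a b → ∀ v, val a v → val b v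

/-- Forcing of a formula at a world of a Kripke model. -/
def KModel.force {V : Type} (K : KModel V) : K.W → PropForm V → Prop
  | w, .var v => K.val w v
  | _, .bot => False
  | _, .top => True
  | w, .and a b => K.force w a ∧ K.force w b
  | w, .or a b => K.force w a ∨ K.force w b
  | w, .imp a b => ∀ w', K.le w w' → K.force w' a → K.force w' b

theorem KModel.force_mono {V : Type} (K : KModel V) (φ : PropForm V) :
    ∀ {w w' : K.W}, K.le w w' → K.force w φ → K.force w' φ := by
  induction φ with
  | var v => intro w w' h hw; exact K.mono h v hw
  | bot => intro w w' h hw; exact hw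
  | top => intro w w' h hw; trivial
  | and a b iha ihb => intro w w' h hw; exact ⟨iha h hw.1, ihb h hw.2⟩
  | or a b iha ihb =>
    intro w w' h hw
    exact hw.elim (fun x => Or.inl (iha h x)) (fun x => Or.inr (ihb h x))
  | imp a b iha ihb => intro w w' h hw w'' h' ha; exact hw w'' (K.trans h h') ha

theorem KModel.sound {V : Type} (K : KModel V) {Γ : Set (PropForm V)} {φ : PropForm V}
    (h : Prov False Γ φ) : ∀ w : K.W, (∀ χ ∈ Γ, K.force w χ) → K.force w φ := by
  induction h with
  | ax hmem => intro w hw; exact hw _ hmem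
  | topI => intro w _; trivial
  | botE _ ih => intro w hw; exact (ih w hw).elim
  | andI _ _ ih1 ih2 => intro w hw; exact ⟨ih1 w hw, ih2 w hw⟩
  | andE1 _ ih => intro w hw; exact (ih w hw).1
  | andE2 _ ih => intro w hw; exact (ih w hw).2
  | orI1 _ ih => intro w hw; exact Or.inl (ih w hw)
  | orI2 _ ih => intro w hw; exact Or.inr (ih w hw)
  | orE _ _ _ ih1 ih2 ih3 =>
    intro w hw
    rcases ih1 w hw with h | h
    · exact ih2 w (by rintro χ (rfl | hχ); exacts [h, hw _ hχ])
    · exact ih3 w (by rintro χ (rfl | hχ); exacts [h, hw _ hχ])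
  | impI _ ih =>
    intro w hw w' hle ha
    exact ih w' (by rintro χ (rfl | hχ); exacts [ha, K.force_mono _ hle (hw _ hχ)])
  | impE _ _ ih1 ih2 => intro w hw; exact ih1 w hw w (K.refl w) (ih2 w hw)
  | em hcl => exact hcl.elim

theorem Prov.compact {V : Type} {cl : Prop} {Γ : Set (PropForm V)} {φ : PropForm V}
    (h : Prov cl Γ φ) : ∃ Δ : Set (PropForm V), Δ.Finite ∧ Δ ⊆ Γ ∧ Prov cl Δ φ := by
  have key : ∀ (a : PropForm V) (G D : Set (PropForm V)), D ⊆ insert a G →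
      D \ {a} ⊆ G ∧ D ⊆ insert a (D \ {a}) := by
    intro a G D hD
    refine ⟨fun x hx => ?_, fun x hx => ?_⟩
    · rcases hD hx.1 with h | h
      · exact (hx.2 h).elim
      · exact h
    · by_cases hxa : x = a
      · exact Or.inl hxa
      · exact Or.inr ⟨hx, hxa⟩
  induction h with
  | @ax Γ φ hmem => exact ⟨{φ}, Set.finite_singleton _, by simpa using hmem, Prov.ax rfl⟩
  | topI => exact ⟨∅, Set.finite_empty, Set.empty_subset _, Prov.topI⟩
  | botE _ ih => obtain ⟨D, h1, h2, h3⟩ := ih; exact ⟨D, h1, h2, Prov.botE h3⟩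
  | andI _ _ ih1 ih2 =>
    obtain ⟨D, h1, h2, h3⟩ := ih1
    obtain ⟨E, k1, k2, k3⟩ := ih2
    exact ⟨D ∪ E, h1.union k1, Set.union_subset h2 k2,
      Prov.andI (h3.mono Set.subset_union_left) (k3.mono Set.subset_union_right)⟩
  | andE1 _ ih => obtain ⟨D, h1, h2, h3⟩ := ih; exact ⟨D, h1, h2, Prov.andE1 h3⟩
  | andE2 _ ih => obtain ⟨D, h1, h2, h3⟩ := ih; exact ⟨D, h1, h2, Prov.andE2 h3⟩
  | orI1 _ ih => obtain ⟨D, h1, h2, h3⟩ := ih; exact ⟨D, h1, h2, Prov.orI1 h3⟩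
  | orI2 _ ih => obtain ⟨D, h1, h2, h3⟩ := ih; exact ⟨D, h1, h2, Prov.orI2 h3⟩
  | @orE Γ φ ψ χ _ _ _ ih1 ih2 ih3 =>
    obtain ⟨D, h1, h2, h3⟩ := ih1
    obtain ⟨E, k1, k2, k3⟩ := ih2
    obtain ⟨F, l1, l2, l3⟩ := ih3
    obtain ⟨a1, a2⟩ := key _ _ _ k2
    obtain ⟨b1, b2⟩ := key _ _ _ l2
    refine ⟨D ∪ (E \ {φ} ∪ F \ {ψ}), h1.union (k1.sdiff.union l1.sdiff),
      Set.union_subset h2 (Set.union_subset a1 b1),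
      Prov.orE (h3.mono Set.subset_union_left) (k3.mono ?_) (l3.mono ?_)⟩
    · exact a2.trans (Set.insert_subset_insert (fun x hx => Or.inr (Or.inl hx)))
    · exact b2.trans (Set.insert_subset_insert (fun x hx => Or.inr (Or.inr hx)))
  | @impI Γ φ ψ _ ih =>
    obtain ⟨D, h1, h2, h3⟩ := ih
    obtain ⟨a1, a2⟩ := key _ _ _ h2
    exact ⟨D \ {φ}, h1.sdiff, a1, Prov.impI (h3.mono a2)⟩
  | impE _ _ ih1 ih2 =>
    obtain ⟨D, h1, h2, h3⟩ := ih1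
    obtain ⟨E, k1, k2, k3⟩ := ih2
    exact ⟨D ∪ E, h1.union k1, Set.union_subset h2 k2,
      Prov.impE (h3.mono Set.subset_union_left) (k3.mono Set.subset_union_right)⟩
  | em hcl => exact ⟨∅, Set.finite_empty, Set.empty_subset _, Prov.em hcl⟩

/-- A set of formulas is a prime theory if it is consistent, deductively closed and has
the disjunction property. -/
def PrimeTheory {V : Type} (Γ : Set (PropForm V)) : Prop :=
  (∀ φ, Prov False Γ φ → φ ∈ Γ) ∧ PropForm.bot ∉ Γ ∧
    ∀ φ ψ, PropForm.or φ ψ ∈ Γ → φ ∈ Γ ∨ ψ ∈ Γ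

/-- Every formula not provable from `Γ` is omitted by a prime theory containing `Γ`:
a maximal extension of `Γ` not proving it is prime. -/
theorem exists_prime {V : Type} {Γ : Set (PropForm V)} {ψ : PropForm V}
    (h : ¬ Prov False Γ ψ) : ∃ Δ, Γ ⊆ Δ ∧ PrimeTheory Δ ∧ ψ ∉ Δ := by
  obtain ⟨Δ, hΓ, hΔ⟩ := zorn_subset_nonempty {D : Set (PropForm V) | ¬ Prov False D ψ}
    (by
      intro c hc hch hne
      refine ⟨⋃₀ c, ?_, fun s hs => Set.subset_sUnion_of_mem hs⟩
      intro hp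
      obtain ⟨D, hfin, hsub, hD⟩ := Prov.compact hp
      obtain ⟨s, hs, hDs⟩ := DirectedOn.exists_mem_subset_of_finite_of_subset_sUnion
        hne hch.directedOn hfin hsub
      exact hc hs (hD.mono hDs)) Γ h
  have hmax : ∀ φ, φ ∉ Δ → Prov False (insert φ Δ) ψ := by
    intro φ hφ
    by_contra hn
    exact hφ (hΔ.2 (y := insert φ Δ) hn (Set.subset_insert _ _) (Set.mem_insert _ _))
  have hprop : ¬ Prov False Δ ψ := hΔ.1
  refine ⟨Δ, hΓ, ⟨?_, ?_, ?_⟩, fun hmem => hprop (Prov.ax hmem)⟩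
  · intro φ hφ
    by_contra hn
    exact hprop (Prov.cut hφ (hmax φ hn))
  · intro hb
    exact hprop (Prov.botE (Prov.ax hb))
  · intro a b hab
    by_contra hn
    push Not at hn
    exact hprop (Prov.orE (Prov.ax hab) (hmax a hn.1) (hmax b hn.2))

/-- The canonical model: prime theories ordered by inclusion. -/
def canon (V : Type) : KModel V where
  W := {Γ : Set (PropForm V) // PrimeTheory Γ}
  le a b := a.1 ⊆ b.1
  refl _ := Set.Subset.refl _
  trans h1 h2 := Set.Subset.trans h1 h2
  val a v := PropForm.var v ∈ a.1
  mono h _ hv := h hv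

theorem canon_truth {V : Type} (φ : PropForm V) :
    ∀ w : (canon V).W, (canon V).force w φ ↔ φ ∈ w.1 := by
  induction φ with
  | var v => intro w; exact Iff.rfl
  | bot => intro w; exact ⟨fun h => h.elim, fun h => w.2.2.1 h⟩
  | top => intro w; exact ⟨fun _ => w.2.1 _ Prov.topI, fun _ => trivial⟩
  | and a b iha ihb =>
    intro w
    change (_ ∧ _) ↔ _
    rw [iha, ihb]
    exact ⟨fun h => w.2.1 _ (Prov.andI (Prov.ax h.1) (Prov.ax h.2)),
      fun h => ⟨w.2.1 _ (Prov.andE1 (Prov.ax h)), w.2.1 _ (Prov.andE2 (Prov.ax h))⟩⟩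
  | or a b iha ihb =>
    intro w
    change (_ ∨ _) ↔ _
    rw [iha, ihb]
    exact ⟨fun h => h.elim (fun h => w.2.1 _ (Prov.orI1 (Prov.ax h)))
      (fun h => w.2.1 _ (Prov.orI2 (Prov.ax h))), w.2.2.2 a b⟩
  | imp a b iha ihb =>
    intro w
    constructor
    · intro h
      by_contra hn
      have : ¬ Prov False (insert a w.1) b := fun hp => hn (w.2.1 _ (Prov.impI hp))
      obtain ⟨D, h1, h2, h3⟩ := exists_prime this
      have := h ⟨D, h2⟩ (fun x hx => h1 (Or.inr hx)) ((iha _).2 (h1 (Or.inl rfl)))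
      exact h3 ((ihb _).1 this)
    · intro h w' hle ha
      exact (ihb _).2 (w'.2.1 _ (Prov.impE (Prov.ax (hle h)) (Prov.ax ((iha _).1 ha))))

theorem entails_sound {V : Type} {φ ψ : PropForm V} (h : Entails False φ ψ) (K : KModel V)
    (w : K.W) (hw : K.force w φ) : K.force w ψ :=
  K.sound h w (by rintro χ rfl; exact hw)

theorem entails_complete {V : Type} {φ ψ : PropForm V}
    (h : ∀ w, (canon V).force w φ → (canon V).force w ψ) : Entails False φ ψ := by
  by_contra hn
  obtain ⟨D, h1, h2, h3⟩ := exists_prime hn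
  exact h3 ((canon_truth ψ ⟨D, h2⟩).1 (h ⟨D, h2⟩ ((canon_truth φ ⟨D, h2⟩).2 (h1 rfl))))

/-- Disjunction of a list of formulas. -/
def orL {V : Type} : List (PropForm V) → PropForm V
  | [] => .bot
  | a :: l => .or a (orL l)

/-- Conjunction of a list of formulas. -/
def andL {V : Type} : List (PropForm V) → PropForm V
  | [] => .top
  | a :: l => .and a (andL l)

theorem KModel.force_orL {V : Type} (K : KModel V) (w : K.W) (l : List (PropForm V)) :
    K.force w (orL l) ↔ ∃ χ ∈ l, K.force w χ := by
  induction l with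
  | nil => simp [orL, KModel.force]
  | cons a l ih => simp [orL, KModel.force, ih]

theorem KModel.force_andL {V : Type} (K : KModel V) (w : K.W) (l : List (PropForm V)) :
    K.force w (andL l) ↔ ∀ χ ∈ l, K.force w χ := by
  induction l with
  | nil => simp [andL, KModel.force]
  | cons a l ih => simp [andL, KModel.force, ih]

/-! ### Bisimulations with Bellissima's model -/

namespace BellissimaModel

variable {n : ℕ} (M : BellissimaModel n)

/-- Bellissima's model as a Kripke model. -/
def toK : KModel (Fin n) where
  W := M.Node
  le := M.le
  refl := M.le_refl
  trans := M.le_trans _ _ _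
  val a v := v ∈ M.val a
  mono h _ hv := M.val_mono _ _ h hv

/-- The strict successors of a node form a finitely generated up-set; nodes of level `0`, where
`T` is empty, are covered uniformly with the others. -/
theorem exists_succs (c : M.Node) : ∃ T : Finset M.Node,
    (∀ b, (M.le c b ∧ c ≠ b) ↔ ∃ a ∈ T, M.le a b) ∧ (∀ a ∈ T, M.level a < M.level c) := by
  rcases hl : M.level c with _ | i
  · refine ⟨∅, fun b => ?_, by simp⟩
    obtain ⟨U, rfl⟩ := M.node0_surj c hl
    simp only [Finset.notMem_empty, false_and, exists_false, iff_false]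
    rintro ⟨h1, h2⟩
    have : M.level b = 0 := by have := M.level_anti _ _ h1; omega
    obtain ⟨U', rfl⟩ := M.node0_surj b this
    exact h2 (by rw [M.node0_antichain _ _ h1])
  · obtain ⟨T, U, hv, rfl⟩ := M.node_surj c i hl
    exact ⟨T, M.node_succ i T U hv, fun a ha => Nat.lt_succ_of_le (hv.1 a ha)⟩

theorem level_lt {c b : M.Node} (h : M.le c b) (hne : c ≠ b) : M.level b < M.level c := by
  obtain ⟨T, h1, h2⟩ := M.exists_succs c
  obtain ⟨a, ha, hab⟩ := (h1 b).1 ⟨h, hne⟩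
  exact lt_of_le_of_lt (M.level_anti _ _ hab) (h2 a ha)

/-- A node is determined by its valuation and its strict successors. -/
theorem node_ext {c d : M.Node} (hv : M.val c = M.val d)
    (h : ∀ b, (M.le c b ∧ c ≠ b) ↔ (M.le d b ∧ d ≠ b)) : c = d := by
  have key : ∀ (x : M.Node) i, M.level x = i + 1 → ∃ b, M.le x b ∧ x ≠ b := by
    intro x i hx
    obtain ⟨T, U, hT, rfl⟩ := M.node_surj x i hx
    obtain ⟨a, ha, -⟩ := hT.2.1
    exact ⟨a, (M.node_succ i T U hT a).2 ⟨a, ha, M.le_refl a⟩⟩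
  have key0 : ∀ x y : M.Node, M.level x = 0 → ¬ (M.le x y ∧ x ≠ y) := by
    rintro x y hx ⟨h1, h2⟩
    have := M.level_lt h1 h2
    omega
  rcases hc : M.level c with _ | i <;> rcases hd : M.level d with _ | j
  · obtain ⟨U, rfl⟩ := M.node0_surj c hc
    obtain ⟨U', rfl⟩ := M.node0_surj d hd
    rw [M.node0_val, M.node0_val] at hv
    rw [hv]
  · obtain ⟨b, hb⟩ := key d j hd
    exact (key0 c b hc ((h b).2 hb)).elim
  · obtain ⟨b, hb⟩ := key c i hc
    exact (key0 d b hd ((h b).1 hb)).elim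
  · obtain ⟨T, U, hT, rfl⟩ := M.node_surj c i hc
    obtain ⟨T', U', hT', rfl⟩ := M.node_surj d j hd
    rw [M.node_val _ _ _ hT, M.node_val _ _ _ hT'] at hv
    subst hv
    have h' : ∀ b, (∃ a ∈ T, M.le a b) ↔ ∃ a ∈ T', M.le a b := fun b => by
      rw [← M.node_succ _ _ _ hT, ← M.node_succ _ _ _ hT']; exact h b
    -- Both sets are antichains generating the same up-set, so they coincide.
    have hsub : ∀ S S' : Finset M.Node, (∀ a ∈ S, ∀ b ∈ S, M.le a b → a = b) →
        (∀ b, (∃ a ∈ S, M.le a b) ↔ ∃ a ∈ S', M.le a b) → S ⊆ S' := by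
      intro S S' hS hSS a ha
      obtain ⟨b, hb, hba⟩ := (hSS a).1 ⟨a, ha, M.le_refl a⟩
      obtain ⟨c, hc, hcb⟩ := (hSS b).2 ⟨b, hb, M.le_refl b⟩
      have hca := hS c hc a ha (M.le_trans _ _ _ hcb hba)
      subst hca
      rwa [M.le_antisymm _ _ hcb hba]
    have : T = T' := Finset.Subset.antisymm (hsub T T' hT.2.2.1 h')
      (hsub T' T hT'.2.2.1 fun b => (h' b).symm)
    rw [this]

/-- A node whose strict successors are exactly the nodes above a single `d` forces
strictly fewer variables than `d`. -/
theorem val_ne_of_single {c d : M.Node} (hcd : M.le c d) (hne : c ≠ d)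
    (h : ∀ b, M.le c b → c ≠ b → M.le d b) : M.val c ≠ M.val d := by
  have hl := M.level_lt hcd hne
  obtain ⟨i, hi⟩ : ∃ i, M.level c = i + 1 := ⟨M.level c - 1, by omega⟩
  obtain ⟨T, U, hT, rfl⟩ := M.node_surj c i hi
  have hT1 : T = {d} := by
    obtain ⟨a, ha, had⟩ := (M.node_succ i T U hT d).1 ⟨hcd, hne⟩
    have hTd : ∀ x ∈ T, M.le d x := fun x hx => by
      have := (M.node_succ i T U hT x).2 ⟨x, hx, M.le_refl x⟩
      exact h x this.1 this.2
    have hda : a = d := M.le_antisymm _ _ had (hTd a ha)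
    subst hda
    ext x
    rw [Finset.mem_singleton]
    exact ⟨fun hx => (hT.2.2.1 a ha x hx (hTd x hx)).symm, fun hx => hx ▸ ha⟩
  rw [M.node_val _ _ _ hT]
  exact (hT.2.2.2.2 d hT1).ne

/-- `w` is bisimilar to the node `c`: some bisimulation between `K` and `M` relates them. -/
def Bis (K : KModel (Fin n)) (w : K.W) (c : M.Node) : Prop :=
  ∃ Z : K.W → M.Node → Prop, Z w c ∧ ∀ w c, Z w c →
    (∀ v, K.val w v ↔ v ∈ M.val c) ∧
    (∀ w', K.le w w' → ∃ c', M.le c c' ∧ Z w' c') ∧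
    (∀ c', M.le c c' → ∃ w', K.le w w' ∧ Z w' c')

variable {M} {K : KModel (Fin n)}

theorem Bis.val {w : K.W} {c : M.Node} (h : M.Bis K w c) (v) : K.val w v ↔ v ∈ M.val c := by
  obtain ⟨Z, h1, h2⟩ := h
  exact (h2 _ _ h1).1 v

theorem Bis.forth {w : K.W} {c : M.Node} (h : M.Bis K w c) {w'} (hw : K.le w w') :
    ∃ c', M.le c c' ∧ M.Bis K w' c' := by
  obtain ⟨Z, h1, h2⟩ := h
  obtain ⟨c', hc, hz⟩ := (h2 _ _ h1).2.1 w' hw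
  exact ⟨c', hc, Z, hz, h2⟩

theorem Bis.back {w : K.W} {c : M.Node} (h : M.Bis K w c) {c'} (hc : M.le c c') :
    ∃ w', K.le w w' ∧ M.Bis K w' c' := by
  obtain ⟨Z, h1, h2⟩ := h
  obtain ⟨w', hw, hz⟩ := (h2 _ _ h1).2.2 c' hc
  exact ⟨w', hw, Z, hz, h2⟩

theorem Bis.force_iff (χ : PropForm (Fin n)) :
    ∀ {w : K.W} {c : M.Node}, M.Bis K w c → (K.force w χ ↔ M.toK.force c χ) := by
  induction χ with
  | var v => intro w c h; exact h.val v
  | bot => intro w c h; exact Iff.rfl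
  | top => intro w c h; exact Iff.rfl
  | and a b iha ihb => intro w c h; exact and_congr (iha h) (ihb h)
  | or a b iha ihb => intro w c h; exact or_congr (iha h) (ihb h)
  | imp a b iha ihb =>
    intro w c h
    constructor
    · intro hw c' hc ha
      obtain ⟨w', hw', hb⟩ := h.back (show M.le c c' from hc)
      exact (ihb hb).1 (hw w' hw' ((iha hb).2 ha))
    · intro hc w' hw ha
      obtain ⟨c', hc', hb⟩ := h.forth hw
      exact (ihb hb).2 (hc c' hc' ((iha hb).1 ha))

/-- Distinct nodes of Bellissima's model are never bisimilar, even through a world of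
another model. -/
theorem Bis.unique : ∀ (N : ℕ) {w : K.W} {c d : M.Node}, M.level c + M.level d = N →
    M.Bis K w c → M.Bis K w d → c = d := by
  intro N
  induction N using Nat.strong_induction_on with
  | _ N ih =>
  intro w c d hN hc hd
  -- Every strict successor of one node lies above the other one.
  have key : ∀ x y : M.Node, M.level x + M.level y = N → M.Bis K w x → M.Bis K w y →
      ∀ b, M.le x b → x ≠ b → M.le y b := by
    intro x y hxy hx hy b hb hne
    obtain ⟨w', hw, hb'⟩ := hx.back hb
    obtain ⟨y', hy', hby⟩ := hy.forth hw
    have h1 := M.level_lt hb hne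
    have h2 := M.level_anti _ _ hy'
    have := ih (M.level b + M.level y') (by omega) rfl hb' hby
    rwa [this]
  have hv : M.val c = M.val d := by ext v; rw [← hc.val v, ← hd.val v]
  have k1 := key c d hN hc hd
  have k2 := key d c (by omega) hd hc
  by_contra hne
  by_cases hcd : M.le c d
  · exact M.val_ne_of_single hcd hne k1 hv
  by_cases hdc : M.le d c
  · exact M.val_ne_of_single hdc (Ne.symm hne) k2 hv.symm
  refine hne (M.node_ext hv fun b => ⟨fun ⟨h1, h2⟩ => ⟨k1 b h1 h2, ?_⟩,
    fun ⟨h1, h2⟩ => ⟨k2 b h1 h2, ?_⟩⟩)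
  · rintro rfl; exact hcd h1
  · rintro rfl; exact hdc h1

theorem Bis.uniq {w : K.W} {c d : M.Node} (hc : M.Bis K w c) (hd : M.Bis K w d) : c = d :=
  Bis.unique _ rfl hc hd

variable (M)

/-- `(u, d)` is a pair of Jankov–de Jongh formulas for the node `c`: in every Kripke model,
`u` holds exactly at the worlds bisimilar to a node above `c`, and `d` fails exactly at the
worlds that see a world bisimilar to `c`. -/
def DeJongh (c : M.Node) (u d : PropForm (Fin n)) : Prop :=
  ∀ (K : KModel (Fin n)) (w : K.W),
    (K.force w u ↔ ∃ c', M.le c c' ∧ M.Bis K w c') ∧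
    (¬ K.force w d ↔ ∃ w', K.le w w' ∧ M.Bis K w' c)

open Classical in
theorem exists_deJongh : ∀ (N : ℕ) (c : M.Node), M.level c = N → ∃ u d, M.DeJongh c u d := by
  intro N
  induction N using Nat.strong_induction_on with
  | _ N ih =>
  intro c hcN
  obtain ⟨T, hT, hTl⟩ := M.exists_succs c
  have ih' : ∀ x : {x // x ∈ T}, ∃ u d, M.DeJongh x.1 u d := fun x =>
    ih _ (hcN ▸ hTl _ x.2) x.1 rfl
  choose u d hud using ih'
  set A : PropForm (Fin n) := orL (T.attach.toList.map u) with hAdef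
  set B : PropForm (Fin n) := orL ((M.val c)ᶜ.toList.map .var) with hBdef
  set D : PropForm (Fin n) := orL (T.attach.toList.map d) with hDdef
  set P : PropForm (Fin n) := andL ((M.val c).toList.map .var) with hPdef
  -- `A` holds exactly at the worlds bisimilar to a strict successor of `c`.
  have hA : ∀ (K : KModel (Fin n)) (w : K.W), K.force w A ↔
      ∃ c', (M.le c c' ∧ c ≠ c') ∧ M.Bis K w c' := by
    intro K w
    rw [hAdef, KModel.force_orL]
    simp only [List.mem_map, Finset.mem_toList, Finset.mem_attach, true_and,
      exists_exists_eq_and]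
    constructor
    · rintro ⟨x, hx⟩
      obtain ⟨c', h1, h2⟩ := ((hud x K w).1).1 hx
      exact ⟨c', (hT c').2 ⟨x, x.2, h1⟩, h2⟩
    · rintro ⟨c', h1, h2⟩
      obtain ⟨a, ha, hac⟩ := (hT c').1 h1
      exact ⟨⟨a, ha⟩, ((hud ⟨a, ha⟩ K w).1).2 ⟨c', hac, h2⟩⟩
  have hB : ∀ (K : KModel (Fin n)) (w : K.W), K.force w B ↔ ∃ v, v ∉ M.val c ∧ K.val w v := by
    intro K w
    rw [hBdef, KModel.force_orL]
    simp [KModel.force]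
  have hP : ∀ (K : KModel (Fin n)) (w : K.W), K.force w P ↔ ∀ v ∈ M.val c, K.val w v := by
    intro K w
    rw [hPdef, KModel.force_andL]
    simp [KModel.force]
  have hD : ∀ (K : KModel (Fin n)) (w : K.W), ¬ K.force w D ↔
      ∀ a ∈ T, ∃ w', K.le w w' ∧ M.Bis K w' a := by
    intro K w
    rw [hDdef, KModel.force_orL]
    simp only [List.mem_map, Finset.mem_toList, Finset.mem_attach, true_and,
      exists_exists_eq_and, not_exists]
    constructor
    · intro h a ha
      exact ((hud ⟨a, ha⟩ K w).2).1 (h ⟨a, ha⟩)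
    · intro h x
      exact ((hud x K w).2).2 (h x.1 x.2)
  have hsucc : ∀ a ∈ T, M.le c a ∧ c ≠ a := fun a ha => (hT a).2 ⟨a, ha, M.le_refl a⟩
  set Up : PropForm (Fin n) := .and P (.imp (.or B D) A) with hUp
  have claim : ∀ (K : KModel (Fin n)) (w : K.W),
      (K.force w Up ∧ ¬ K.force w A) ↔ M.Bis K w c := by
    intro K w
    constructor
    · intro hw
      refine ⟨fun x y => M.Bis K x y ∨ (y = c ∧ K.force x Up ∧ ¬ K.force x A),
        Or.inr ⟨rfl, hw⟩, ?_⟩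
      rintro x y (hb | ⟨rfl, hu, hna⟩)
      · exact ⟨hb.val, fun w' h => (hb.forth h).imp fun _ h => ⟨h.1, Or.inl h.2⟩,
          fun c' h => (hb.back h).imp fun _ h => ⟨h.1, Or.inl h.2⟩⟩
      · have himp : ∀ w', K.le x w' → K.force w' (.or B D) → K.force w' A := hu.2
        refine ⟨fun v => ⟨fun hv => ?_, fun hv => (hP K x).1 hu.1 v hv⟩, fun w' hw' => ?_,
          fun c' hc' => ?_⟩
        · by_contra hn
          exact hna (himp x (K.refl x) (Or.inl ((hB K x).2 ⟨v, hn, hv⟩)))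
        · by_cases ha : K.force w' A
          · obtain ⟨c', h1, h2⟩ := (hA K w').1 ha
            exact ⟨c', h1.1, Or.inl h2⟩
          · exact ⟨y, M.le_refl y, Or.inr ⟨rfl, K.force_mono _ hw' hu, ha⟩⟩
        · by_cases he : y = c'
          · subst he
            exact ⟨x, K.refl x, Or.inr ⟨rfl, hu, hna⟩⟩
          · obtain ⟨a, ha, hac⟩ := (hT c').1 ⟨hc', he⟩
            have hnd : ¬ K.force x D := fun hd => hna (himp x (K.refl x) (Or.inr hd))
            obtain ⟨w1, h1, hb1⟩ := (hD K x).1 hnd a ha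
            obtain ⟨w2, h2, hb2⟩ := hb1.back hac
            exact ⟨w2, K.trans h1 h2, Or.inl hb2⟩
    · intro hb
      refine ⟨⟨(hP K w).2 fun v hv => (hb.val v).2 hv, ?_⟩, ?_⟩
      · intro w' hw' hor
        obtain ⟨c', hc', hb'⟩ := hb.forth hw'
        by_cases he : c = c'
        · subst he
          rcases hor with h | h
          · obtain ⟨v, hv, hv'⟩ := (hB K w').1 h
            exact (hv ((hb'.val v).1 hv')).elim
          · exact ((hD K w').2 (fun a ha => hb'.back (hsucc a ha).1) h).elim
        · exact (hA K w').2 ⟨c', ⟨hc', he⟩, hb'⟩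
      · intro ha
        obtain ⟨c', h1, h2⟩ := (hA K w).1 ha
        exact h1.2 (hb.uniq h2)
  refine ⟨Up, .imp Up A, fun K w => ⟨⟨fun h => ?_, ?_⟩, ?_⟩⟩
  · by_cases ha : K.force w A
    · obtain ⟨c', h1, h2⟩ := (hA K w).1 ha
      exact ⟨c', h1.1, h2⟩
    · exact ⟨c, M.le_refl c, (claim K w).1 ⟨h, ha⟩⟩
  · rintro ⟨c', hc', hb⟩
    by_cases he : c = c'
    · subst he; exact ((claim K w).2 hb).1
    · refine ⟨(hP K w).2 fun v hv => (hb.val v).2 (M.val_mono _ _ hc' hv), ?_⟩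
      intro w' hw' _
      exact K.force_mono _ hw' ((hA K w).2 ⟨c', ⟨hc', he⟩, hb⟩)
  · simp only [← claim]
    simp only [KModel.force, not_forall, exists_prop]

end BellissimaModel

/-! ### Translating formulas from `n` to `m` variables -/

open Classical in
/-- The translation of formulas in `n` variables to formulas in `m` variables.  `FA j` and
`FB j` are meant to be the sets of formulas forced at the nodes `α_j` and `β_j`.  The
translation of `χ₁ → χ₂` records, besides the implication of the translations, that the
implication does not fail at any `β_k`, nor at an `α_j` whose variable is not forced. -/
noncomputable def circ {m n : ℕ} (FA FB : Fin m → PropForm (Fin n) → Prop) :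
    PropForm (Fin n) → PropForm (Fin m)
  | .var _ => .bot
  | .bot => .bot
  | .top => .top
  | .and a b => .and (circ FA FB a) (circ FA FB b)
  | .or a b => .or (circ FA FB a) (circ FA FB b)
  | .imp a b => .and (.imp (circ FA FB a) (circ FA FB b))
      (.and (andL ((Finset.univ.filter fun j => ¬ FA j (.imp a b)).toList.map .var))
        (if ∃ k, ¬ FB k (.imp a b) then .bot else .top))

theorem force_circ_imp {m n : ℕ} (FA FB : Fin m → PropForm (Fin n) → Prop)
    (Q : KModel (Fin m)) (q : Q.W) (a b : PropForm (Fin n)) :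
    Q.force q (circ FA FB (.imp a b)) ↔
      (∀ q', Q.le q q' → Q.force q' (circ FA FB a) → Q.force q' (circ FA FB b)) ∧
      (∀ j, ¬ FA j (.imp a b) → Q.val q j) ∧ ∀ k, FB k (.imp a b) := by
  rw [circ]
  simp only [KModel.force]
  refine and_congr Iff.rfl (and_congr ?_ ?_)
  · rw [KModel.force_andL]; simp [KModel.force]
  · split_ifs with h
    · simpa [KModel.force] using h
    · push Not at h; simpa [KModel.force] using h

/-- Truth lemma for the translation: `E` relates worlds `w` of an `n`-model to worlds `q` of
an `m`-model so that, up to bisimilarity, `w` sees worlds related to those above `q` and,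
besides them, exactly the nodes above some `β_k` or above some `α_j` with `p_j` not forced
at `q`. -/
theorem circ_truth {m n : ℕ} (M : BellissimaModel n) (a b : Fin m → M.Node)
    (P : KModel (Fin n)) (Q : KModel (Fin m)) (E : P.W → Q.W → Prop)
    (hval : ∀ w q, E w q → ∀ v, ¬ P.val w v)
    (hforth : ∀ w q, E w q → ∀ w', P.le w w' → (∃ q', Q.le q q' ∧ E w' q') ∨
      ∃ c, M.Bis P w' c ∧ ((∃ k, M.le (b k) c) ∨ ∃ j, ¬ Q.val q j ∧ M.le (a j) c))
    (hback : ∀ w q, E w q → ∀ q', Q.le q q' → ∃ w', P.le w w' ∧ E w' q')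
    (hb : ∀ w q, E w q → ∀ k, ∃ w', P.le w w' ∧ M.Bis P w' (b k))
    (ha : ∀ w q, E w q → ∀ j, ¬ Q.val q j → ∃ w', P.le w w' ∧ M.Bis P w' (a j))
    (χ : PropForm (Fin n)) : ∀ w q, E w q → (P.force w χ ↔
      Q.force q (circ (fun j => M.toK.force (a j)) (fun k => M.toK.force (b k)) χ)) := by
  induction χ with
  | var v => intro w q h; exact ⟨fun hv => hval w q h v hv, fun hv => False.elim hv⟩
  | bot => intro w q h; exact Iff.rfl
  | top => intro w q h; exact Iff.rfl
  | and x y ihx ihy => intro w q h; exact and_congr (ihx w q h) (ihy w q h)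
  | or x y ihx ihy => intro w q h; exact or_congr (ihx w q h) (ihy w q h)
  | imp x y ihx ihy =>
    intro w q h
    rw [force_circ_imp]
    constructor
    · intro hw
      refine ⟨fun q' hq hx => ?_, fun j hj => ?_, fun k => ?_⟩
      · obtain ⟨w', hw', hE⟩ := hback w q h q' hq
        exact (ihy w' q' hE).1 (hw w' hw' ((ihx w' q' hE).2 hx))
      · by_contra hn
        obtain ⟨w', hw', hB⟩ := ha w q h j hn
        exact hj ((hB.force_iff (.imp x y)).1 (P.force_mono (.imp x y) hw' hw))
      · obtain ⟨w', hw', hB⟩ := hb w q h k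
        exact (hB.force_iff (.imp x y)).1 (P.force_mono (.imp x y) hw' hw)
    · rintro ⟨h1, h2, h3⟩ w' hw' hx
      rcases hforth w q h w' hw' with ⟨q', hq, hE⟩ | ⟨c, hB, ⟨k, hk⟩ | ⟨j, hj, hjc⟩⟩
      · exact (ihy w' q' hE).2 (h1 q' hq ((ihx w' q' hE).1 hx))
      · exact (hB.force_iff y).2 (h3 k c hk ((hB.force_iff x).1 hx))
      · have : M.toK.force (a j) (.imp x y) := by
          by_contra hn; exact hj (h2 j hn)
        exact (hB.force_iff y).2 (this c hjc ((hB.force_iff x).1 hx))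

/-- The translation back from `m` to `n` variables: `φ` plays the role of `⊥`, and `dn j` of
the variable `p_j`. -/
def star {m n : ℕ} (φ : PropForm (Fin n)) (dn : Fin m → PropForm (Fin n)) :
    PropForm (Fin m) → PropForm (Fin n)
  | .var j => .or φ (dn j)
  | .bot => φ
  | .top => .top
  | .and a b => .and (star φ dn a) (star φ dn b)
  | .or a b => .or (star φ dn a) (star φ dn b)
  | .imp a b => .imp (star φ dn a) (star φ dn b)

theorem force_star_of_force {m n : ℕ} (φ : PropForm (Fin n)) (dn : Fin m → PropForm (Fin n))
    (K : KModel (Fin n)) (θ : PropForm (Fin m)) :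
    ∀ w, K.force w φ → K.force w (star φ dn θ) := by
  induction θ with
  | var j => intro w h; exact Or.inl h
  | bot => intro w h; exact h
  | top => intro w h; trivial
  | and x y ihx ihy => intro w h; exact ⟨ihx w h, ihy w h⟩
  | or x y ihx ihy => intro w h; exact Or.inl (ihx w h)
  | imp x y ihx ihy => intro w h w' hw _; exact ihy w' (K.force_mono _ hw h)

/-! ### Gluing an `m`-model onto Bellissima's model -/

/-- The `n`-model obtained by putting an `m`-model `Q` below `M`: a world `q` of `Q` forces no
variable, and sees the nodes above every `β_k` and above those `α_j` with `p_j` not forced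
at `q`. -/
def glue {m n : ℕ} (M : BellissimaModel n) (a b : Fin m → M.Node) (Q : KModel (Fin m)) :
    KModel (Fin n) where
  W := Q.W ⊕ M.Node
  le
    | .inl q, .inl q' => Q.le q q'
    | .inl q, .inr c => (∃ k, M.le (b k) c) ∨ ∃ j, ¬ Q.val q j ∧ M.le (a j) c
    | .inr _, .inl _ => False
    | .inr c, .inr c' => M.le c c'
  refl
    | .inl q => Q.refl q
    | .inr c => M.le_refl c
  trans := by
    rintro (q | c) (q' | c') (q'' | c'') h1 h2
    · exact Q.trans h1 h2
    · exact Or.imp id (fun ⟨j, hj, hc⟩ => ⟨j, fun hv => hj (Q.mono h1 j hv), hc⟩) h2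
    · exact h2.elim
    · exact h1.imp (fun ⟨k, hk⟩ => ⟨k, M.le_trans _ _ _ hk h2⟩)
        (fun ⟨j, hj, hc⟩ => ⟨j, hj, M.le_trans _ _ _ hc h2⟩)
    · exact h1.elim
    · exact h1.elim
    · exact h2.elim
    · exact M.le_trans _ _ _ h1 h2
  val
    | .inl _, _ => False
    | .inr c, v => v ∈ M.val c
  mono := by
    rintro (q | c) (q' | c') h v hv
    · exact hv
    · exact hv.elim
    · exact h.elim
    · exact M.val_mono _ _ h hv

theorem glue_bis {m n : ℕ} (M : BellissimaModel n) (a b : Fin m → M.Node) (Q : KModel (Fin m))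
    (c : M.Node) : M.Bis (glue M a b Q) (Sum.inr c) c := by
  refine ⟨fun w d => w = Sum.inr d, rfl, ?_⟩
  rintro w d rfl
  refine ⟨fun v => Iff.rfl, ?_, fun c' h => ⟨Sum.inr c', h, rfl⟩⟩
  rintro (q | c') h
  · exact h.elim
  · exact ⟨c', h, rfl⟩

theorem glue_circ {m n : ℕ} (M : BellissimaModel n) (a b : Fin m → M.Node) (Q : KModel (Fin m))
    (χ : PropForm (Fin n)) (q : Q.W) : (glue M a b Q).force (Sum.inl q) χ ↔
      Q.force q (circ (fun j => M.toK.force (a j)) (fun k => M.toK.force (b k)) χ) := by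
  refine circ_truth M a b (glue M a b Q) Q (fun w q => w = Sum.inl q) ?_ ?_ ?_ ?_ ?_ χ _ q rfl
  · rintro w q rfl v h; exact h
  · rintro w q rfl (q' | c) h
    · exact Or.inl ⟨q', h, rfl⟩
    · exact Or.inr ⟨c, glue_bis M a b Q c, h⟩
  · rintro w q rfl q' h; exact ⟨Sum.inl q', h, rfl⟩
  · rintro w q rfl k
    exact ⟨Sum.inr (b k), Or.inl ⟨k, M.le_refl _⟩, glue_bis M a b Q _⟩
  · rintro w q rfl j hj
    exact ⟨Sum.inr (a j), Or.inr ⟨j, hj, M.le_refl _⟩, glue_bis M a b Q _⟩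

/-! ### The interval -/

/-- The lower end of the interval: the disjunction of the formulas `up j`, where `up j`
defines the up-set generated by `α_j`. -/
noncomputable def phiF {m n : ℕ} (up : Fin m → PropForm (Fin n)) : PropForm (Fin n) :=
  orL (Finset.univ.toList.map up)

/-- The upper end of the interval.  Outside `φ`, it says that no variable is forced, that every
`β_k` is seen, and that the nodes above the `α_j` which are seen are above some `β_k` or above
some `α_j` that is itself seen; here `S` ranges over the possible sets of indices `j` for which
`α_j` is not seen. -/
noncomputable def psiF {m n : ℕ} (upA dnA upB dnB : Fin m → PropForm (Fin n)) :
    PropForm (Fin n) :=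
  .and (.imp (orL (Finset.univ.toList.map .var)) (phiF upA))
    (.and (andL (Finset.univ.toList.map fun k => .imp (dnB k) (phiF upA)))
      (andL ((Finset.univ : Finset (Finset (Fin m))).toList.map fun S =>
        .imp (andL (S.toList.map dnA)) (.or (phiF upA)
          (.imp (phiF upA) (.or (phiF upB) (orL (Sᶜ.toList.map upA))))))))

theorem force_phiF {m n : ℕ} (up : Fin m → PropForm (Fin n)) (K : KModel (Fin n)) (w : K.W) :
    K.force w (phiF up) ↔ ∃ j, K.force w (up j) := by
  rw [phiF, KModel.force_orL]; simp

theorem force_psiF {m n : ℕ} (upA dnA upB dnB : Fin m → PropForm (Fin n))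
    (K : KModel (Fin n)) (w : K.W) : K.force w (psiF upA dnA upB dnB) ↔
      (∀ w', K.le w w' → (∃ v, K.val w' v) → K.force w' (phiF upA)) ∧
      (∀ k w', K.le w w' → K.force w' (dnB k) → K.force w' (phiF upA)) ∧
      (∀ (S : Finset (Fin m)) w', K.le w w' → (∀ j ∈ S, K.force w' (dnA j)) →
        K.force w' (phiF upA) ∨ ∀ w'', K.le w' w'' → K.force w'' (phiF upA) →
          (∃ k, K.force w'' (upB k)) ∨ ∃ j, j ∉ S ∧ K.force w'' (upA j)) := by
  simp only [psiF, KModel.force, KModel.force_andL, KModel.force_orL, force_phiF,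
    List.mem_map, Finset.mem_toList, Finset.mem_univ, true_and, Finset.mem_compl,
    exists_exists_and_eq_and, exists_exists_eq_and, forall_exists_index,
    forall_apply_eq_imp_iff, and_imp, forall_apply_eq_imp_iff₂]

/-- The core of the argument, with the set `A` enumerated as `a` and the chosen successors
as `b`. -/
theorem interval_iso_core {m n : ℕ} (M : BellissimaModel n) (a b : Fin m → M.Node)
    (hm : 2 ≤ m) (hab : ∀ j, M.le (a j) (b j)) (hba : ∀ k j, ¬ M.le (b k) (a j))
    (haa : ∀ j k, M.le (a j) (a k) → j = k) (hsep : ∀ j k, j ≠ k → ¬ M.le (a j) (b k)) :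
    ∃ φ ψ : Lindenbaum False (Fin n), Lindenbaum.le φ ψ ∧
      ∃ h : Lindenbaum False (Fin n) → Lindenbaum False (Fin m),
        (∀ a b, h (Lindenbaum.inf a b) = Lindenbaum.inf (h a) (h b)) ∧
        (∀ a b, h (Lindenbaum.sup a b) = Lindenbaum.sup (h a) (h b)) ∧
        Function.Surjective h ∧
        Set.BijOn h {ρ : Lindenbaum False (Fin n) | Lindenbaum.le φ ρ ∧ Lindenbaum.le ρ ψ}
          (Set.univ : Set (Lindenbaum False (Fin m))) := by
  choose upA dnA hA using fun j => M.exists_deJongh _ (a j) rfl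
  choose upB dnB hB using fun j => M.exists_deJongh _ (b j) rfl
  set φ := phiF upA with hφ
  set ψ := psiF upA dnA upB dnB with hψ
  set tr := circ (fun j => M.toK.force (a j)) (fun k => M.toK.force (b k)) with htr
  have φ_iff : ∀ (K : KModel (Fin n)) (w : K.W), K.force w φ ↔
      ∃ j c, M.le (a j) c ∧ M.Bis K w c := by
    intro K w
    rw [hφ, force_phiF]
    exact exists_congr fun j => (hA j K w).1
  have hφψ : Entails False φ ψ := by
    apply entails_complete
    intro w hw
    rw [hψ, force_psiF]
    exact ⟨fun w' h _ => KModel.force_mono _ _ h hw, fun k w' h _ => KModel.force_mono _ _ h hw,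
      fun S w' h _ => Or.inl (KModel.force_mono _ _ h hw)⟩
  -- The glued-in worlds lie in the interval region and realise each `p_j` as `dnA j`.
  have glue_φ : ∀ (Q : KModel (Fin m)) (q : Q.W), ¬ (glue M a b Q).force (Sum.inl q) φ := by
    intro Q q h
    obtain ⟨j, c, hjc, hc⟩ := (φ_iff _ _).1 h
    -- A node bisimilar to `q` would lie below every `β_k`, but `α_j` does not.
    obtain ⟨k, hk⟩ : ∃ k : Fin m, j ≠ k := by
      have : Nontrivial (Fin m) := Fin.nontrivial_iff_two_le.2 hm
      obtain ⟨k, hk⟩ := exists_ne j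
      exact ⟨k, hk.symm⟩
    obtain ⟨c', hcc', hb'⟩ := hc.forth (w' := Sum.inr (b k)) (Or.inl ⟨k, M.le_refl _⟩)
    have := hb'.uniq (glue_bis M a b Q (b k))
    subst this
    exact hsep j k hk (M.le_trans _ _ _ hjc hcc')
  have glue_r : ∀ (Q : KModel (Fin m)) (q : Q.W) (c : M.Node),
      (glue M a b Q).le (Sum.inl q) (Sum.inr c) → (glue M a b Q).force (Sum.inr c) φ := by
    intro Q q c h
    refine (φ_iff _ _).2 ?_
    rcases h with ⟨k, hk⟩ | ⟨j, -, hj⟩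
    · exact ⟨k, c, M.le_trans _ _ _ (hab k) hk, glue_bis M a b Q c⟩
    · exact ⟨j, c, hj, glue_bis M a b Q c⟩
  have glue_dn : ∀ (Q : KModel (Fin m)) (q : Q.W) j,
      (glue M a b Q).force (Sum.inl q) (dnA j) ↔ Q.val q j := by
    intro Q q j
    refine not_iff_not.1 ((hA j _ _).2.trans ?_)
    constructor
    · rintro ⟨q' | c, hw, hbis⟩
      · exact (glue_φ Q q' ((φ_iff _ _).2 ⟨j, _, M.le_refl _, hbis⟩)).elim
      · have := hbis.uniq (glue_bis M a b Q c)
        subst this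
        rcases hw with ⟨k, hk⟩ | ⟨j', hj', hle⟩
        · exact (hba k j hk).elim
        · rwa [← haa _ _ hle]
    · intro hj
      exact ⟨Sum.inr (a j), Or.inr ⟨j, hj, M.le_refl _⟩, glue_bis M a b Q _⟩
  have glue_ψ : ∀ (Q : KModel (Fin m)) (q : Q.W), (glue M a b Q).force (Sum.inl q) ψ := by
    intro Q q
    refine (force_psiF upA dnA upB dnB _ _).2 ⟨?_, ?_, ?_⟩
    · rintro (q' | c) hw ⟨v, hv⟩
      · exact hv.elim
      · exact glue_r Q q c hw
    · rintro k (q' | c) hw hd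
      · exact (((hB k _ _).2).2 ⟨Sum.inr (b k), Or.inl ⟨k, M.le_refl _⟩,
          glue_bis M a b Q _⟩ hd).elim
      · exact glue_r Q q c hw
    · rintro S (q' | c) hw hS
      · right
        rintro (q'' | c) hw' hw''
        · exact (glue_φ Q q'' hw'').elim
        · rcases hw' with ⟨k, hk⟩ | ⟨j, hj, hle⟩
          · exact Or.inl ⟨k, ((hB k _ _).1).2 ⟨c, hk, glue_bis M a b Q c⟩⟩
          · exact Or.inr ⟨j, fun hjS => hj ((glue_dn Q q' j).1 (hS j hjS)),
              ((hA j _ _).1).2 ⟨c, hle, glue_bis M a b Q c⟩⟩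
      · exact Or.inl (glue_r Q q c hw)
  have glue_star : ∀ (Q : KModel (Fin m)) (θ : PropForm (Fin m)) (q : Q.W),
      (glue M a b Q).force (Sum.inl q) (star φ dnA θ) ↔ Q.force q θ := by
    intro Q θ
    induction θ with
    | var j => intro q; exact (or_iff_right (glue_φ Q q)).trans (glue_dn Q q j)
    | bot => intro q; exact iff_false_intro (glue_φ Q q)
    | top => intro q; exact Iff.rfl
    | and x y ihx ihy => intro q; exact and_congr (ihx q) (ihy q)
    | or x y ihx ihy => intro q; exact or_congr (ihx q) (ihy q)
    | imp x y ihx ihy =>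
      intro q
      constructor
      · intro h q' hq hx
        exact (ihy q').1 (h (Sum.inl q') hq ((ihx q').2 hx))
      · rintro h (q' | c) hq hx
        · exact (ihy q').2 (h q' hq ((ihx q').1 hx))
        · exact force_star_of_force _ _ _ _ _ (glue_r Q q c hq)
  have tr_mono : ∀ χ χ', Entails False χ χ' → Entails False (tr χ) (tr χ') := by
    intro χ χ' h
    apply entails_complete
    intro q hq
    exact (glue_circ M a b _ χ' q).1 (entails_sound h _ _ ((glue_circ M a b _ χ q).2 hq))
  -- Conversely, the translation reflects entailment inside the interval.
  have tr_refl : ∀ χ χ', Entails False χ ψ → Entails False φ χ' →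
      Entails False (tr χ) (tr χ') → Entails False χ χ' := by
    intro χ χ' h1 h2 h3
    apply entails_complete
    generalize canon (Fin n) = P
    intro x hx
    by_contra hx'
    let Q : KModel (Fin m) :=
      { W := {z : P.W // P.force z ψ ∧ ¬ P.force z φ}
        le := fun z z' => P.le z.1 z'.1
        refl := fun z => P.refl _
        trans := fun h h' => P.trans h h'
        val := fun z j => P.force z.1 (dnA j)
        mono := fun h j hv => P.force_mono _ h hv }
    have hψ' : ∀ z : Q.W, _ := fun z => (force_psiF upA dnA upB dnB P z.1).1 z.2.1
    have main := circ_truth M a b P Q (fun w q => w = q.1)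
      (by
        rintro w q rfl v hv
        exact q.2.2 ((hψ' q).1 q.1 (P.refl _) ⟨v, hv⟩))
      (by
        classical
        rintro w q rfl w' hw
        by_cases hw' : P.force w' φ
        · right
          rcases (hψ' q).2.2 (Finset.univ.filter fun j => P.force q.1 (dnA j)) q.1 (P.refl _)
            (by simp) with h | h
          · exact (q.2.2 h).elim
          rcases h w' hw hw' with ⟨k, hk⟩ | ⟨j, hj, hj'⟩
          · obtain ⟨c, hc, hbis⟩ := ((hB k _ _).1).1 hk
            exact ⟨c, hbis, Or.inl ⟨k, hc⟩⟩
          · obtain ⟨c, hc, hbis⟩ := ((hA j _ _).1).1 hj'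
            exact ⟨c, hbis, Or.inr ⟨j, by simpa using hj, hc⟩⟩
        · exact Or.inl ⟨⟨w', P.force_mono _ hw q.2.1, hw'⟩, hw, rfl⟩)
      (by rintro w q rfl q' hq; exact ⟨q'.1, hq, rfl⟩)
      (by
        rintro w q rfl k
        exact ((hB k _ _).2).1 fun hd => q.2.2 ((hψ' q).2.1 k q.1 (P.refl _) hd))
      (by
        rintro w q rfl j hj
        exact ((hA j _ _).2).1 hj)
    have hxφ : ¬ P.force x φ := fun h => hx' (entails_sound h2 _ _ h)
    have hxψ : P.force x ψ := entails_sound h1 _ _ hx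
    exact hx' ((main χ' x ⟨x, hxψ, hxφ⟩ rfl).2
      (entails_sound h3 _ _ ((main χ x ⟨x, hxψ, hxφ⟩ rfl).1 hx)))
  let h : Lindenbaum False (Fin n) → Lindenbaum False (Fin m) :=
    Quotient.map tr fun x y hxy => ⟨tr_mono _ _ hxy.1, tr_mono _ _ hxy.2⟩
  have hsurj : Set.SurjOn h {ρ | Lindenbaum.le (Lindenbaum.mk False φ) ρ ∧
      Lindenbaum.le ρ (Lindenbaum.mk False ψ)} Set.univ := by
    intro θ _
    induction θ using Quotient.inductionOn with
    | _ θ =>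
    refine ⟨Lindenbaum.mk False (.and (star φ dnA θ) ψ), ⟨?_, ?_⟩, ?_⟩
    · refine entails_complete fun w hw => ⟨force_star_of_force _ _ _ _ _ hw, ?_⟩
      exact entails_sound hφψ _ _ hw
    · exact Prov.andE2 (Prov.ax rfl)
    · refine Quotient.sound ⟨entails_complete fun q hq => ?_, entails_complete fun q hq => ?_⟩
      · exact (glue_star _ θ q).1 ((glue_circ M a b _ _ q).2 hq).1
      · exact (glue_circ M a b _ _ q).1 ⟨(glue_star _ θ q).2 hq, glue_ψ _ q⟩
  refine ⟨Lindenbaum.mk False φ, Lindenbaum.mk False ψ, hφψ, h, ?_, ?_, ?_, ?_, ?_, hsurj⟩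
  · intro x y
    induction x, y using Quotient.inductionOn₂ with
    | _ x y => rfl
  · intro x y
    induction x, y using Quotient.inductionOn₂ with
    | _ x y => rfl
  · intro θ
    obtain ⟨x, -, hx⟩ := hsurj (Set.mem_univ θ)
    exact ⟨x, hx⟩
  · exact fun _ _ => Set.mem_univ _
  · intro x hx y hy hxy
    induction x, y using Quotient.inductionOn₂ with
    | _ x y =>
    have hxy' : Entails False (tr x) (tr y) ∧ Entails False (tr y) (tr x) :=
      Quotient.exact hxy
    exact Quotient.sound ⟨tr_refl x y hx.2 hy.1 hxy'.1, tr_refl y x hy.2 hx.1 hxy'.2⟩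

/-- Bellissima-model criterion: let `m ≥ 2`, `n ≥ 1`, and suppose in Bellissima's model
`K_n` there are a level `i` and a set `A ⊆ Lev^n_i` of cardinality `m` such that every
`α ∈ A` has an immediate successor which is not above any other element of `A`.  Then there
are `φ ≤ ψ` in `H_n` with `[φ, ψ]` lattice-isomorphic to `H_m`, via an isomorphism that
extends to a surjective lattice homomorphism from `H_n` onto `H_m`. -/
theorem interval_iso_of_bellissima_level (m n : ℕ) (hm : 2 ≤ m) (hn : 1 ≤ n)
    (M : BellissimaModel n)
    (hA : ∃ (i : ℕ) (A : Finset M.Node), A.card = m ∧ (∀ α ∈ A, α ∈ M.Lev i) ∧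
      ∀ α ∈ A, ∃ β,
        ((M.le α β ∧ α ≠ β) ∧ ¬∃ γ, (M.le α γ ∧ α ≠ γ) ∧ (M.le γ β ∧ γ ≠ β)) ∧
        ∀ α' ∈ A, α' ≠ α → ¬ M.le α' β) :
    ∃ φ ψ : Lindenbaum False (Fin n), Lindenbaum.le φ ψ ∧
      ∃ h : Lindenbaum False (Fin n) → Lindenbaum False (Fin m),
        (∀ a b, h (Lindenbaum.inf a b) = Lindenbaum.inf (h a) (h b)) ∧
        (∀ a b, h (Lindenbaum.sup a b) = Lindenbaum.sup (h a) (h b)) ∧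
        Function.Surjective h ∧
        Set.BijOn h {ρ : Lindenbaum False (Fin n) | Lindenbaum.le φ ρ ∧ Lindenbaum.le ρ ψ}
          (Set.univ : Set (Lindenbaum False (Fin m))) := by
  obtain ⟨i, A, hcard, hlev, hsucc⟩ := hA
  let e : A ≃ Fin m := A.equivFinOfCardEq hcard
  choose β hβ1 hβ2 using hsucc
  have hlev' : ∀ j, M.level (e.symm j).1 = i := fun j => hlev _ (e.symm j).2
  refine interval_iso_core M (fun j => (e.symm j).1) (fun j => β (e.symm j).1 (e.symm j).2) hm
    (fun j => (hβ1 _ _).1.1) ?_ ?_ ?_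
  · intro k j hle
    have h1 := M.level_lt (hβ1 _ (e.symm k).2).1.1 (hβ1 _ (e.symm k).2).1.2
    have h2 := M.level_anti _ _ hle
    rw [hlev'] at h1 h2
    omega
  · intro j k hle
    by_contra hne
    have h1 := M.level_lt hle (fun h => hne (e.symm.injective (Subtype.ext h)))
    rw [hlev', hlev'] at h1
    omega
  · intro j k hne hle
    exact hβ2 _ (e.symm k).2 _ (e.symm j).2
      (fun h => hne (e.symm.injective (Subtype.ext h))) hle
end

section
/- For all m ≥ 1 and n ≥ 2, there is a consequence-respecting, (∧,∨)-preserving translation from m-variable intuitionistic propositional logic to n-variable intuitionistic propositional logic. -/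
/-! ### Derivability -/

namespace PropForm

theorem prov_of_forall_prov {V : Type} {Δ : Set (PropForm V)} {φ : PropForm V}
    (h : IProv Δ φ) : ∀ {Γ : Set (PropForm V)}, (∀ δ ∈ Δ, IProv Γ δ) → IProv Γ φ := by
  have key : ∀ {Γ Δ : Set (PropForm V)} {a : PropForm V}, (∀ δ ∈ Δ, IProv Γ δ) →
      ∀ δ ∈ insert a Δ, IProv (insert a Γ) δ := by
    intro Γ Δ a h δ hδ
    rcases hδ with rfl | hδ
    · exact Prov.ax (Set.mem_insert _ _)
    · exact (h δ hδ).mono (Set.subset_insert _ _)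
  induction h with
  | ax hmem => intro Γ hs; exact hs _ hmem
  | topI => intro Γ _; exact Prov.topI
  | botE _ ih => intro Γ hs; exact Prov.botE (ih hs)
  | andI _ _ ih1 ih2 => intro Γ hs; exact Prov.andI (ih1 hs) (ih2 hs)
  | andE1 _ ih => intro Γ hs; exact Prov.andE1 (ih hs)
  | andE2 _ ih => intro Γ hs; exact Prov.andE2 (ih hs)
  | orI1 _ ih => intro Γ hs; exact Prov.orI1 (ih hs)
  | orI2 _ ih => intro Γ hs; exact Prov.orI2 (ih hs)
  | orE _ _ _ ih1 ih2 ih3 =>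
      intro Γ hs
      exact Prov.orE (ih1 hs) (ih2 (key hs)) (ih3 (key hs))
  | impI _ ih => intro Γ hs; exact Prov.impI (ih (key hs))
  | impE _ _ ih1 ih2 => intro Γ hs; exact Prov.impE (ih1 hs) (ih2 hs)
  | em hcl => exact hcl.elim

theorem prov_of_entails {V : Type} {Γ : Set (PropForm V)} {φ ψ : PropForm V}
    (h1 : IProv Γ φ) (h2 : Entails False φ ψ) : IProv Γ ψ :=
  prov_of_forall_prov h2 (by rintro δ rfl; exact h1)

theorem entails_imp_congr {V : Type} {a b c d : PropForm V}
    (h1 : Entails False b a) (h2 : Entails False c d) :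
    Entails False (imp a c) (imp b d) := by
  refine Prov.impI (prov_of_entails (Prov.impE (φ := a) ?_ ?_) h2)
  · exact Prov.ax (Set.mem_insert_of_mem _ rfl)
  · exact prov_of_entails (Prov.ax (Set.mem_insert _ _)) h1

/-- The homomorphic extension of `v` to formulas, with `⊥` replaced by `b`. -/
def tr {V W : Type} (v : V → PropForm W) (b : PropForm W) : PropForm V → PropForm W
  | var i => v i
  | bot => b
  | top => top
  | and φ ψ => and (tr v b φ) (tr v b ψ)
  | or φ ψ => or (tr v b φ) (tr v b ψ)
  | imp φ ψ => imp (tr v b φ) (tr v b ψ)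

theorem entails_tr {V W : Type} {v : V → PropForm W} {b : PropForm W}
    (hb : ∀ i, Entails False b (v i)) : ∀ φ : PropForm V, Entails False b (tr v b φ)
  | var i => hb i
  | bot => Entails.refl b
  | top => Prov.topI
  | and φ ψ => Prov.andI (entails_tr hb φ) (entails_tr hb ψ)
  | or φ _ => Prov.orI1 (entails_tr hb φ)
  | imp _ ψ => Prov.impI ((entails_tr hb ψ).mono (Set.subset_insert _ _))

theorem prov_tr {V W : Type} {v : V → PropForm W} {b : PropForm W}
    (hb : ∀ i, Entails False b (v i)) {Γ : Set (PropForm V)} {φ : PropForm V}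
    (h : IProv Γ φ) : IProv (tr v b '' Γ) (tr v b φ) := by
  induction h with
  | ax hmem => exact Prov.ax (Set.mem_image_of_mem _ hmem)
  | topI => exact Prov.topI
  | botE _ ih => exact prov_of_entails ih (entails_tr hb _)
  | andI _ _ ih1 ih2 => exact Prov.andI ih1 ih2
  | andE1 _ ih => exact Prov.andE1 ih
  | andE2 _ ih => exact Prov.andE2 ih
  | orI1 _ ih => exact Prov.orI1 ih
  | orI2 _ ih => exact Prov.orI2 ih
  | orE _ _ _ ih1 ih2 ih3 =>
      rw [Set.image_insert_eq] at ih2 ih3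
      exact Prov.orE ih1 ih2 ih3
  | impI _ ih =>
      rw [Set.image_insert_eq] at ih
      exact Prov.impI ih
  | impE _ _ ih1 ih2 => exact Prov.impE ih1 ih2
  | em hcl => exact hcl.elim

/-! ### Translatability -/

/-- There is a consequence-respecting, `(∧,∨)`-preserving translation from formulas over `V` to
formulas over `W`; consequence from the empty set is respected too. -/
def Translatable (V W : Type) : Prop :=
  ∃ f : PropForm V → PropForm W,
    (∀ (Γ : Set (PropForm V)) (φ : PropForm V), IProv Γ φ ↔ IProv (f '' Γ) (f φ)) ∧
    (∀ φ ψ, f (and φ ψ) = and (f φ) (f ψ)) ∧ (∀ φ ψ, f (or φ ψ) = or (f φ) (f ψ))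

theorem Translatable.trans {U V W : Type} (h1 : Translatable U V) (h2 : Translatable V W) :
    Translatable U W := by
  obtain ⟨f, hf, hfa, hfo⟩ := h1
  obtain ⟨g, hg, hga, hgo⟩ := h2
  refine ⟨g ∘ f, fun Γ φ => ?_, fun φ ψ => ?_, fun φ ψ => ?_⟩
  · rw [hf, hg, Set.image_image]; rfl
  · simp [hfa, hga]
  · simp [hfo, hgo]

theorem translatable_of_injective {V W : Type} {j : V → W} (hj : Function.Injective j) :
    Translatable V W := by
  classical
  let v : V → PropForm W := fun i => var (j i)
  -- A retraction: variables outside the range of `j` are sent to `⊤`.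
  let u : W → PropForm V := fun w => if h : ∃ i, j i = w then var h.choose else top
  have hbot : ∀ {X : Type} (φ : PropForm X), Entails False bot φ := fun φ =>
    Prov.botE (Prov.ax rfl)
  have hu : ∀ i, u (j i) = var i := by
    intro i
    have h : ∃ k, j k = j i := ⟨i, rfl⟩
    simp only [u, dif_pos h]
    rw [hj h.choose_spec]
  have huv : ∀ φ : PropForm V, tr u bot (tr v bot φ) = φ := by
    intro φ
    induction φ with
    | var i => exact hu i
    | bot => rfl
    | top => rfl
    | and φ ψ ih1 ih2 => simp only [tr, ih1, ih2]
    | or φ ψ ih1 ih2 => simp only [tr, ih1, ih2]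
    | imp φ ψ ih1 ih2 => simp only [tr, ih1, ih2]
  refine ⟨tr v bot, fun Γ φ => ⟨prov_tr fun i => hbot _, fun h => ?_⟩,
    fun _ _ => rfl, fun _ _ => rfl⟩
  have h' := prov_tr (v := u) (b := bot) (fun i => hbot _) h
  rw [Set.image_image] at h'
  simpa only [huv, Set.image_id'] using h'

/-! ### The ten-point frame -/

/-- Truth at the maximal point where the two special variables have the values `e`; all the
variables in `K` are true there. -/
def ev {K : Type} (e : Bool × Bool) : PropForm (K ⊕ Fin 2) → Bool
  | var (Sum.inl _) => true
  | var (Sum.inr i) => if i = 0 then e.1 else e.2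
  | bot => false
  | top => true
  | and φ ψ => ev e φ && ev e ψ
  | or φ ψ => ev e φ || ev e ψ
  | imp φ ψ => !ev e φ || ev e ψ

/-- The first maximal point above `b_j`. -/
def fst : Fin 6 → Bool × Bool :=
  ![(true, true), (false, true), (true, true), (true, true), (true, false), (true, false)]

/-- The second maximal point above `b_j`. -/
def snd : Fin 6 → Bool × Bool :=
  ![(true, false), (false, false), (false, true), (false, false), (false, true), (false, false)]

/-- The index of the point below the two maximal points not above `b_j`. -/
def co : Fin 6 → Fin 6 := ![1, 0, 5, 4, 3, 2]

/-- Truth at the point `b_j`, where both special variables are false and the variables in `K`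
are true. -/
def fb {K : Type} (j : Fin 6) : PropForm (K ⊕ Fin 2) → Bool
  | var (Sum.inl _) => true
  | var (Sum.inr _) => false
  | bot => false
  | top => true
  | and φ ψ => fb j φ && fb j ψ
  | or φ ψ => fb j φ || fb j ψ
  | imp φ ψ => (!fb j φ || fb j ψ) && ev (fst j) (imp φ ψ) && ev (snd j) (imp φ ψ)

theorem fb_persist {K : Type} (j : Fin 6) (φ : PropForm (K ⊕ Fin 2)) (h : fb j φ = true) :
    ev (fst j) φ = true ∧ ev (snd j) φ = true := by
  induction φ with
  | var i => cases i <;> simp_all [fb, ev]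
  | bot => simp [fb] at h
  | top => simp [ev]
  | and φ ψ ih1 ih2 => simp_all [fb, ev]
  | or φ ψ ih1 ih2 =>
    simp only [fb, Bool.or_eq_true] at h
    rcases h with h | h
    · simp [ev, ih1 h]
    · simp [ev, ih2 h]
  | imp φ ψ ih1 ih2 =>
    simp only [fb, Bool.and_eq_true] at h
    exact ⟨h.1.2, h.2⟩

/-- "The maximal point with values `e` is not seen." -/
def mu (K : Type) (e : Bool × Bool) : PropForm (K ⊕ Fin 2) :=
  let lit (i : Fin 2) (x : Bool) : PropForm (K ⊕ Fin 2) :=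
    if x then var (Sum.inr i) else imp (var (Sum.inr i)) bot
  imp (and (lit 0 e.1) (lit 1 e.2)) bot

/-- "The point `b_j` is not seen." -/
def alpha (K : Type) (j : Fin 6) : PropForm (K ⊕ Fin 2) :=
  imp (and (mu K (fst (co j))) (mu K (snd (co j)))) (or (mu K (fst j)) (mu K (snd j)))

/-- "Not both of `b₀` and `b₁` are seen." -/
def beta (K : Type) : PropForm (K ⊕ Fin 2) := or (alpha K 0) (alpha K 1)

theorem ev_mu (K : Type) (e e' : Bool × Bool) : ev e (mu K e') = decide (e ≠ e') := by
  obtain ⟨a, b⟩ := e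
  obtain ⟨c, d⟩ := e'
  cases a <;> cases b <;> cases c <;> cases d <;> rfl

theorem fb_mu (K : Type) (j : Fin 6) (e : Bool × Bool) :
    fb j (mu K e) = decide (fst j ≠ e ∧ snd j ≠ e) := by
  obtain ⟨c, d⟩ := e
  cases c <;> cases d <;> fin_cases j <;> rfl

theorem ev_alpha (K : Type) (e : Bool × Bool) (j : Fin 6) : ev e (alpha K j) = true := by
  simp only [alpha, ev, ev_mu]
  revert e j
  decide

theorem fb_alpha (K : Type) (i j : Fin 6) : fb i (alpha K j) = decide (i ≠ j) := by
  simp only [alpha, fb, ev, ev_mu, fb_mu]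
  revert i j
  decide

/-! ### Reading target formulas at the source points -/

/-- The source formula that a source point satisfies exactly when it does not lie below `b_j`. -/
def cond (K : Type) : Fin 6 → PropForm (K ⊕ Fin 4) :=
  ![bot, bot, var (Sum.inr 0), var (Sum.inr 1), var (Sum.inr 2), var (Sum.inr 3)]

/-- The conjunction of the six formulas `c j`. -/
def conj {V : Type} (c : Fin 6 → PropForm V) : PropForm V :=
  and (c 0) (and (c 1) (and (c 2) (and (c 3) (and (c 4) (c 5)))))

theorem prov_conj {V : Type} {Γ : Set (PropForm V)} {c : Fin 6 → PropForm V} :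
    IProv Γ (conj c) ↔ ∀ j, IProv Γ (c j) := by
  constructor
  · intro h j
    have h1 := h.andE2
    have h2 := h1.andE2
    have h3 := h2.andE2
    have h4 := h3.andE2
    fin_cases j
    exacts [h.andE1, h1.andE1, h2.andE1, h3.andE1, h4.andE1, h4.andE2]
  · intro h
    exact .andI (h 0) (.andI (h 1) (.andI (h 2) (.andI (h 3) (.andI (h 4) (h 5)))))

/-- The source formula expressing truth of a target formula at the source points, in the model
obtained by placing a source model below the ten-point frame. An implication must also hold at each
`b_j` that is seen. -/
def back {K : Type} : PropForm (K ⊕ Fin 2) → PropForm (K ⊕ Fin 4)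
  | var (Sum.inl k) => var (Sum.inl k)
  | var (Sum.inr _) => bot
  | bot => bot
  | top => top
  | and φ ψ => and (back φ) (back ψ)
  | or φ ψ => or (back φ) (back ψ)
  | imp φ ψ => and (imp (back φ) (back ψ))
      (conj fun j => if fb j (imp φ ψ) = true then top else cond K j)

/-- Persistence from source points to the frame: a source point satisfying `φ` is not below a `b_j`
refuting `φ`. -/
theorem back_entails_cond {K : Type} (j : Fin 6) (φ : PropForm (K ⊕ Fin 2))
    (h : fb j φ = false) : Entails False (back φ) (cond K j) := by
  induction φ with
  | var i =>
    cases i with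
    | inl k => simp [fb] at h
    | inr k => exact Prov.botE (Prov.ax rfl)
  | bot => exact Prov.botE (Prov.ax rfl)
  | top => simp [fb] at h
  | and φ ψ ih1 ih2 =>
    simp only [fb, Bool.and_eq_false_iff] at h
    rcases h with h | h
    · exact prov_of_entails (Prov.andE1 (Prov.ax rfl)) (ih1 h)
    · exact prov_of_entails (Prov.andE2 (Prov.ax rfl)) (ih2 h)
  | or φ ψ ih1 ih2 =>
    simp only [fb, Bool.or_eq_false_iff] at h
    exact Prov.orE (Prov.ax rfl)
      (prov_of_entails (Prov.ax (Set.mem_insert _ _)) (ih1 h.1))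
      (prov_of_entails (Prov.ax (Set.mem_insert _ _)) (ih2 h.2))
  | imp φ ψ ih1 ih2 =>
    have h1 : Prov False {back (imp φ ψ)}
        (conj fun j => if fb j (imp φ ψ) = true then top else cond K j) :=
      Prov.andE2 (Prov.ax rfl)
    have h2 := prov_conj.1 h1 j
    rw [if_neg (by simp [h])] at h2
    exact h2

theorem ev_sound {K : Type} (e : Bool × Bool) {Γ : Set (PropForm (K ⊕ Fin 2))}
    {φ : PropForm (K ⊕ Fin 2)} (h : IProv Γ φ) (hΓ : ∀ γ ∈ Γ, ev e γ = true) :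
    ev e φ = true := by
  induction h with
  | ax hmem => exact hΓ _ hmem
  | topI => rfl
  | botE _ ih => simpa [ev] using ih hΓ
  | andI _ _ ih1 ih2 => simp [ev, ih1 hΓ, ih2 hΓ]
  | andE1 _ ih => have := ih hΓ; simp_all [ev]
  | andE2 _ ih => have := ih hΓ; simp_all [ev]
  | orI1 _ ih => simp [ev, ih hΓ]
  | orI2 _ ih => simp [ev, ih hΓ]
  | orE _ _ _ ih1 ih2 ih3 =>
    have := ih1 hΓ
    simp only [ev, Bool.or_eq_true] at this
    rcases this with h | h
    · exact ih2 (by simpa [Set.forall_mem_insert] using ⟨h, hΓ⟩)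
    · exact ih3 (by simpa [Set.forall_mem_insert] using ⟨h, hΓ⟩)
  | @impI _ a b _ ih =>
    rcases h : ev e a with _ | _
    · simp [ev, h]
    · simp [ev, ih (by simpa [Set.forall_mem_insert] using ⟨h, hΓ⟩)]
  | impE _ _ ih1 ih2 =>
    have h1 := ih1 hΓ
    have h2 := ih2 hΓ
    simpa [ev, h2] using h1
  | em hcl => exact hcl.elim

theorem fb_sound {K : Type} (j : Fin 6) {Γ : Set (PropForm (K ⊕ Fin 2))}
    {φ : PropForm (K ⊕ Fin 2)} (h : IProv Γ φ) (hΓ : ∀ γ ∈ Γ, fb j γ = true) :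
    fb j φ = true := by
  induction h with
  | ax hmem => exact hΓ _ hmem
  | topI => rfl
  | botE _ ih => simpa [fb] using ih hΓ
  | andI _ _ ih1 ih2 => simp [fb, ih1 hΓ, ih2 hΓ]
  | andE1 _ ih => have := ih hΓ; simp_all [fb]
  | andE2 _ ih => have := ih hΓ; simp_all [fb]
  | orI1 _ ih => simp [fb, ih hΓ]
  | orI2 _ ih => simp [fb, ih hΓ]
  | orE _ _ _ ih1 ih2 ih3 =>
    have := ih1 hΓ
    simp only [fb, Bool.or_eq_true] at this
    rcases this with h | h
    · exact ih2 (by simpa [Set.forall_mem_insert] using ⟨h, hΓ⟩)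
    · exact ih3 (by simpa [Set.forall_mem_insert] using ⟨h, hΓ⟩)
  | @impI Γ a b hab ih =>
    have hf := ev_sound (fst j) (Prov.impI hab) fun γ hγ => (fb_persist j γ (hΓ γ hγ)).1
    have hs := ev_sound (snd j) (Prov.impI hab) fun γ hγ => (fb_persist j γ (hΓ γ hγ)).2
    simp only [fb, hf, hs, Bool.and_true]
    rcases h : fb j a with _ | _
    · simp
    · simp [ih (by simpa [Set.forall_mem_insert] using ⟨h, hΓ⟩)]
  | impE _ _ ih1 ih2 =>
    have h1 := ih1 hΓ
    have h2 := ih2 hΓ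
    simp only [fb, h2, Bool.and_eq_true] at h1
    simpa using h1.1.1
  | em hcl => exact hcl.elim

theorem soundness {K : Type} {Γ : Set (PropForm (K ⊕ Fin 2))} {φ : PropForm (K ⊕ Fin 2)}
    (h : IProv Γ φ) : IProv (back '' Γ) (back φ) := by
  induction h with
  | ax hmem => exact Prov.ax (Set.mem_image_of_mem _ hmem)
  | topI => exact Prov.topI
  | botE _ ih => exact Prov.botE ih
  | andI _ _ ih1 ih2 => exact Prov.andI ih1 ih2
  | andE1 _ ih => exact Prov.andE1 ih
  | andE2 _ ih => exact Prov.andE2 ih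
  | orI1 _ ih => exact Prov.orI1 ih
  | orI2 _ ih => exact Prov.orI2 ih
  | orE _ _ _ ih1 ih2 ih3 =>
      rw [Set.image_insert_eq] at ih2 ih3
      exact Prov.orE ih1 ih2 ih3
  | @impI Γ a b hab ih =>
      rw [Set.image_insert_eq] at ih
      refine Prov.andI (Prov.impI ih) (prov_conj.2 fun j => ?_)
      split_ifs with hj
      · exact Prov.topI
      · -- The frame is sound, so `b_j` refutes some premise, which therefore yields `cond K j`.
        have hex : ∃ γ ∈ Γ, fb j γ = false := by
          by_contra! hall
          exact hj (fb_sound j (Prov.impI hab) fun γ hγ => by simpa using hall γ hγ)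
        obtain ⟨γ, hγ, hγj⟩ := hex
        exact prov_of_entails (Prov.ax (Set.mem_image_of_mem _ hγ)) (back_entails_cond j γ hγj)
  | impE _ _ ih1 ih2 => exact Prov.impE ih1.andE1 ih2
  | em hcl => exact hcl.elim

/-! ### Conservativity -/

/-- Every source point lies below both `b₀` and `b₁`, so it sees all four maximal points. -/
theorem back_mu_entails_bot (K : Type) (e : Bool × Bool) :
    Entails False (back (mu K e)) bot := by
  have h : fb 0 (mu K e) = false ∨ fb 1 (mu K e) = false := by
    simp only [fb_mu]
    revert e
    decide
  rcases h with h | h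
  · exact back_entails_cond 0 _ h
  · exact back_entails_cond 1 _ h

theorem back_alpha (K : Type) (j : Fin 6) :
    Entails False (back (alpha K j)) (cond K j) ∧ Entails False (cond K j) (back (alpha K j)) := by
  refine ⟨back_entails_cond j _ (by simp [fb_alpha]), ?_⟩
  refine Prov.andI (Prov.impI (Prov.botE ?_)) (prov_conj.2 fun i => ?_)
  · exact prov_of_entails (Prov.andE1 (Prov.ax (Set.mem_insert _ _))) (back_mu_entails_bot K _)
  · change IProv _ (if fb i (alpha K j) = true then top else cond K i)
    rw [fb_alpha]
    by_cases hij : i = j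
    · subst hij
      rw [if_neg (by simp)]
      exact Prov.ax rfl
    · simpa [hij] using Prov.topI

theorem back_beta (K : Type) : Entails False (back (beta K)) bot :=
  Prov.orE (Prov.ax rfl)
    (prov_of_entails (Prov.ax (Set.mem_insert _ _)) (back_alpha K 0).1)
    (prov_of_entails (Prov.ax (Set.mem_insert _ _)) (back_alpha K 1).1)

/-- The values of the translation at variables. -/
def fwdVar (K : Type) : K ⊕ Fin 4 → PropForm (K ⊕ Fin 2)
  | Sum.inl k => or (var (Sum.inl k)) (beta K)
  | Sum.inr i => or (alpha K ((![2, 3, 4, 5] : Fin 4 → Fin 6) i)) (beta K)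

/-- The translation trading four variables for two. -/
def fwd {K : Type} : PropForm (K ⊕ Fin 4) → PropForm (K ⊕ Fin 2) := tr (fwdVar K) (beta K)

theorem beta_entails_fwdVar (K : Type) (i : K ⊕ Fin 4) : Entails False (beta K) (fwdVar K i) := by
  cases i <;> exact Prov.orI2 (Prov.ax rfl)

theorem fb_fwd {K : Type} (j : Fin 6) (φ : PropForm (K ⊕ Fin 4)) : fb j (fwd φ) = true := by
  refine fb_sound j (entails_tr (beta_entails_fwdVar K) φ) ?_
  rintro γ rfl
  simp only [beta, fb, fb_alpha]
  revert j
  decide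

theorem back_fwd {K : Type} (φ : PropForm (K ⊕ Fin 4)) :
    Entails False (back (fwd φ)) φ ∧ Entails False φ (back (fwd φ)) := by
  have hor : ∀ {a c : PropForm (K ⊕ Fin 4)}, Entails False a c → Entails False c a →
      Entails False (or a (back (beta K))) c ∧ Entails False c (or a (back (beta K))) := by
    intro a c h1 h2
    refine ⟨Prov.orE (Prov.ax rfl) (prov_of_entails (Prov.ax (Set.mem_insert _ _)) h1) ?_,
      Prov.orI1 h2⟩
    exact Prov.botE (prov_of_entails (Prov.ax (Set.mem_insert _ _)) (back_beta K))
  induction φ with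
  | var i =>
    cases i with
    | inl k => exact hor (Entails.refl _) (Entails.refl _)
    | inr i =>
      have hc : cond K ((![2, 3, 4, 5] : Fin 4 → Fin 6) i) = var (Sum.inr i) := by
        fin_cases i <;> rfl
      have h := back_alpha K ((![2, 3, 4, 5] : Fin 4 → Fin 6) i)
      rw [hc] at h
      exact hor h.1 h.2
  | bot => exact ⟨back_beta K, Prov.botE (Prov.ax rfl)⟩
  | top => exact ⟨Prov.topI, Prov.topI⟩
  | and φ ψ ih1 ih2 => exact ⟨ih1.1.and_congr ih2.1, ih1.2.and_congr ih2.2⟩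
  | or φ ψ ih1 ih2 => exact ⟨ih1.1.or_congr ih2.1, ih1.2.or_congr ih2.2⟩
  | imp φ ψ ih1 ih2 =>
    refine ⟨?_, Prov.andI (entails_imp_congr ih1.1 ih2.2) (prov_conj.2 fun j => ?_)⟩
    · exact prov_of_entails (Prov.andE1 (Prov.ax rfl)) (entails_imp_congr ih1.2 ih2.1)
    · have hj := fb_fwd j (imp φ ψ)
      simp only [fwd, tr] at hj
      rw [if_pos hj]
      exact Prov.topI

theorem translatable_four_two (K : Type) : Translatable (K ⊕ Fin 4) (K ⊕ Fin 2) := by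
  refine ⟨fwd, fun Γ φ => ⟨prov_tr (beta_entails_fwdVar K), fun h => ?_⟩,
    fun _ _ => rfl, fun _ _ => rfl⟩
  have h1 := prov_of_entails (soundness h) (back_fwd φ).1
  refine prov_of_forall_prov h1 ?_
  rintro _ ⟨_, ⟨γ, hγ, rfl⟩, rfl⟩
  exact prov_of_entails (Prov.ax hγ) (back_fwd γ).2

theorem translatable_add_two {n : ℕ} (hn : 2 ≤ n) : Translatable (Fin (n + 2)) (Fin n) := by
  obtain ⟨k, rfl⟩ := Nat.exists_eq_add_of_le' hn
  exact ((translatable_of_injective (finSumFinEquiv (m := k) (n := 4)).symm.injective).trans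
    (translatable_four_two (Fin k))).trans
      (translatable_of_injective (finSumFinEquiv (m := k) (n := 2)).injective)

theorem translatable_add_two_mul {n : ℕ} (hn : 2 ≤ n) (j : ℕ) :
    Translatable (Fin (n + 2 * j)) (Fin n) := by
  induction j with
  | zero => exact translatable_of_injective Function.injective_id
  | succ j ih => exact (translatable_add_two (by omega : 2 ≤ n + 2 * j)).trans ih

end PropForm

/-- For `m ≥ 1` and `n ≥ 2` there is a consequence-respecting, `(∧,∨)`-preserving
translation from `m`-variable intuitionistic logic to `n`-variable intuitionistic logic. -/
theorem exists_consequence_respecting_lattice_translation (m n : ℕ) (hm : 1 ≤ m) (hn : 2 ≤ n) :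
    ∃ f : PropForm (Fin m) → PropForm (Fin n),
      (∀ Γ : Set (PropForm (Fin m)), Γ.Nonempty →
        ∀ φ : PropForm (Fin m), (IProv Γ φ ↔ IProv (f '' Γ) (f φ))) ∧
      (∀ φ ψ : PropForm (Fin m), f (PropForm.and φ ψ) = PropForm.and (f φ) (f ψ)) ∧
      (∀ φ ψ : PropForm (Fin m), f (PropForm.or φ ψ) = PropForm.or (f φ) (f ψ)) := by
  obtain ⟨f, hf, hand, hor⟩ :=
    (PropForm.translatable_of_injective
      (Fin.castLE_injective (by omega : m ≤ n + 2 * m))).trans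
      (PropForm.translatable_add_two_mul hn m)
  exact ⟨f, fun Γ _ φ => hf Γ φ, hand, hor⟩
end
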